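/- arXiv:0707.0836 — 3 statements merged into one kernel-verified Lean document; each statement's English description precedes it below -/
import Mathlib

section
/- For every e-multipartition α of n and every integer r ≥ 0, a^c(Λ^{r,r}_b(α)) = a^c(r(Λ^{r,0}_d(α))), where r denotes the rotation of symbols. -/
namespace Spets

/-- The set of positions of a symbol with `e` rows, row `i` having `m i` entries. -/
abbrev Pos (e : ℕ) (m : ℕ → ℕ) := Σ i : Fin e, Fin (m (i : ℕ))

/-- The total order `≺` on positions: `(i,j) ≺ (k,l)` iff `j < l`, or
`j = l`, `k > 0` and `i = 0`, or `j = l`, `k > 0` and `i > k`. -/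
def posLt {e : ℕ} {m : ℕ → ℕ} (p q : Pos e m) : Prop :=
  (p.2 : ℕ) < (q.2 : ℕ) ∨
    ((p.2 : ℕ) = (q.2 : ℕ) ∧ (q.1 : ℕ) ≠ 0 ∧ ((p.1 : ℕ) = 0 ∨ (q.1 : ℕ) < (p.1 : ℕ)))

instance {e : ℕ} {m : ℕ → ℕ} (p q : Pos e m) : Decidable (posLt p q) := by
  unfold posLt; infer_instance

/-- The entry of the protosymbol `Φ^{r,s}` at a position:
row `0` is `(0, r, 2r, …)`, row `i > 0` is `(s, r+s, 2r+s, …)`. -/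
def proto (r s : ℕ) {e : ℕ} {m : ℕ → ℕ} (p : Pos e m) : ℤ :=
  (p.2 : ℤ) * (r : ℤ) + (if (p.1 : ℕ) = 0 then 0 else (s : ℤ))

/-- The entry of the symbol `Λ^{r,s}_m(α)` at a position.  Here a multipartition is
recorded as `α : ℕ → ℕ → ℕ` where `α i` is the list of the parts of the `i`-th
partition **largest part first** (so `α i` is antitone, zero-padded); the entry of the
symbol at position `(i,j)` (with row `i` of length `m i`, entries listed increasingly)
is `α i (m i - 1 - j) + Φ^{r,s}_i^{(j)}`. -/
def symb (α : ℕ → ℕ → ℕ) (r s : ℕ) {e : ℕ} {m : ℕ → ℕ} (p : Pos e m) : ℤ :=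
  (α (p.1 : ℕ) (m (p.1 : ℕ) - 1 - (p.2 : ℕ)) : ℤ) + proto r s p

/-- `a^c(Λ) = ∑_{(i,j) ≺ (k,l)} (min(Λ_i^{(j)}, Λ_k^{(l)}) - Φ_i^{(j)})`. -/
def ac {e : ℕ} {m : ℕ → ℕ} (Λ Φ : Pos e m → ℤ) : ℤ :=
  ∑ p : Pos e m, ∑ q : Pos e m, if posLt p q then min (Λ p) (Λ q) - Φ p else 0

/-- `b^c(Λ) = ∑_{(i,j) ≺ (k,l)} (Λ_i^{(j)} - Φ_i^{(j)})`. -/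
def bc {e : ℕ} {m : ℕ → ℕ} (Λ Φ : Pos e m → ℤ) : ℤ :=
  ∑ p : Pos e m, ∑ q : Pos e m, if posLt p q then Λ p - Φ p else 0

/-- A symbol is distinguished if its entries are increasing along `≺`. -/
def Distinguished {e : ℕ} {m : ℕ → ℕ} (Λ : Pos e m → ℤ) : Prop :=
  ∀ p q : Pos e m, posLt p q → Λ p ≤ Λ q

/-- The weight `b = (1,0,…,0)`, padded so that every row has `M` entries
(and row `0` has `M+1`). -/
def wB (M : ℕ) : ℕ → ℕ := fun i => if i = 0 then M + 1 else M

/-- The weight `d = (0,…,0)`, padded so that every row has `M` entries. -/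
def wD (M : ℕ) : ℕ → ℕ := fun _ => M

/-- The `k`-th power of the rotation `r(α_0, …, α_{e-1}) = (α_1, …, α_{e-1}, α_0)`
of an `e`-multipartition. -/
def rotIter (e k : ℕ) (α : ℕ → ℕ → ℕ) : ℕ → ℕ → ℕ :=
  fun i => if i < e then α ((i + k) % e) else fun _ => 0

/-- `α` is (the largest-part-first, zero-padded recording of) an `e`-multipartition
of `n` all of whose rows have at most `M` parts. -/
def IsMP (e n M : ℕ) (α : ℕ → ℕ → ℕ) : Prop :=
  (∀ i, Antitone (α i)) ∧ (∀ i j, e ≤ i ∨ M ≤ j → α i j = 0) ∧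
    (∑ i ∈ Finset.range e, ∑ j ∈ Finset.range M, α i j) = n

/-! When the protosymbol is weakly increasing along `≺`, the summand of `a^c` at `(i,j) ≺ (k,l)`
is `min(Λ_i^{(j)}, Λ_k^{(l)}) - min(Φ_i^{(j)}, Φ_k^{(l)})`.  This is symmetric in the two positions
and unchanged by a simultaneous shift of `Λ` and `Φ`, so `a^c` only depends on the family of pairs
of entries `(Λ, Φ)`, up to a shift, and not on the order `≺`.  The entries of the rotated weight `d`
symbol, raised by `r`, are those of the weight `b` symbol away from position `(0,0)`; there `Λ` and
`Φ` both vanish, hence attain every minimum they take part in and contribute nothing. -/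

section PosLt

variable {e : ℕ} {m : ℕ → ℕ}

theorem pos_ext {p q : Pos e m} (hrow : (p.1 : ℕ) = q.1) (hcol : (p.2 : ℕ) = q.2) : p = q := by
  obtain ⟨i, j⟩ := p
  obtain ⟨k, l⟩ := q
  obtain rfl : i = k := Fin.ext hrow
  obtain rfl : j = l := Fin.ext hcol
  rfl

instance : Std.Asymm (posLt : Pos e m → Pos e m → Prop) where
  asymm p q hpq hqp := by
    unfold posLt at hpq hqp
    omega

instance : Std.Trichotomous (posLt : Pos e m → Pos e m → Prop) where
  trichotomous p q hpq hqp := by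
    unfold posLt at hpq hqp
    apply pos_ext <;> omega

end PosLt

theorem two_nsmul_sum_sum_ite_of_symm {ι A : Type*} [Fintype ι] [DecidableEq ι] [AddCommMonoid A]
    (R : ι → ι → Prop) [DecidableRel R] [Std.Asymm R] [Std.Trichotomous R]
    {g : ι → ι → A} (hg : ∀ p q, g p q = g q p) :
    2 • ∑ p, ∑ q, (if R p q then g p q else 0) = ∑ p, ∑ q, if p = q then 0 else g p q := by
  have swap : ∑ p, ∑ q, (if R p q then g p q else 0) =
      ∑ p, ∑ q, if R q p then g p q else 0 := by
    rw [Finset.sum_comm]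
    simp only [hg]
  rw [two_nsmul]
  nth_rewrite 2 [swap]
  simp only [← Finset.sum_add_distrib]
  refine Finset.sum_congr rfl fun p _ => Finset.sum_congr rfl fun q _ => ?_
  rcases trichotomous_of R p q with hpq | rfl | hqp
  · simp [hpq, asymm_of R hpq, ne_of_irrefl hpq]
  · simp [irrefl_of R p]
  · simp [hqp, asymm_of R hqp, ne_of_irrefl' hqp]

section MinGap

variable {ι : Type*}

/-- The symmetric form `min(Λ_p, Λ_q) - min(Φ_p, Φ_q)` of the summand of `a^c` at a pair of
positions; it agrees with `min(Λ_p, Λ_q) - Φ_p` when `Φ_p ≤ Φ_q`. -/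
def minGap (Λ Φ : ι → ℤ) (p q : ι) : ℤ :=
  min (Λ p) (Λ q) - min (Φ p) (Φ q)

theorem minGap_comm (Λ Φ : ι → ℤ) (p q : ι) : minGap Λ Φ p q = minGap Λ Φ q p := by
  simp only [minGap, min_comm]

theorem minGap_eq_zero_of_left {Λ Φ : ι → ℤ} {p q : ι} (hΛp : Λ p = 0) (hΦp : Φ p = 0)
    (hΛq : 0 ≤ Λ q) (hΦq : 0 ≤ Φ q) : minGap Λ Φ p q = 0 := by
  simp [minGap, hΛp, hΦp, hΛq, hΦq]

theorem minGap_eq_of_add_const {κ : Type*} {Λ Φ : ι → ℤ} {Λ' Φ' : κ → ℤ} {f : ι → κ} {c : ℤ}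
    (hΛ : ∀ p, Λ' (f p) = Λ p + c) (hΦ : ∀ p, Φ' (f p) = Φ p + c) (p q : ι) :
    minGap Λ' Φ' (f p) (f q) = minGap Λ Φ p q := by
  simp only [minGap, hΛ, hΦ, min_add_add_right, add_sub_add_right_eq_sub]

end MinGap

section Ac

variable {e e' : ℕ} {m m' : ℕ → ℕ}

theorem two_mul_ac (Λ : Pos e m → ℤ) {Φ : Pos e m → ℤ} (hΦ : Distinguished Φ) :
    2 * ac Λ Φ = ∑ p, ∑ q, if p = q then 0 else minGap Λ Φ p q := by
  have ac_eq : ac Λ Φ = ∑ p, ∑ q, if posLt p q then minGap Λ Φ p q else 0 := by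
    refine Finset.sum_congr rfl fun p _ => Finset.sum_congr rfl fun q _ => ?_
    split_ifs with hpq
    · rw [minGap, min_eq_left (hΦ p q hpq)]
    · rfl
  rw [ac_eq, ← two_nsmul_sum_sum_ite_of_symm posLt (minGap_comm Λ Φ), nsmul_eq_mul, Nat.cast_ofNat]

theorem ac_eq_ac_of_injective {Λ Φ : Pos e m → ℤ} {Λ' Φ' : Pos e' m' → ℤ}
    (hΦ : Distinguished Φ) (hΦ' : Distinguished Φ')
    {f : Pos e m → Pos e' m'} (hf : Function.Injective f) {c : ℤ}
    (hΛf : ∀ p, Λ' (f p) = Λ p + c) (hΦf : ∀ p, Φ' (f p) = Φ p + c)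
    (hrange : ∀ p ∉ Set.range f, ∀ q, minGap Λ' Φ' p q = 0) :
    ac Λ Φ = ac Λ' Φ' := by
  refine mul_left_cancel₀ (two_ne_zero' ℤ) ?_
  rw [two_mul_ac Λ hΦ, two_mul_ac Λ' hΦ']
  refine Fintype.sum_of_injective f hf _ _ (fun p hp => ?_) fun p =>
    Fintype.sum_of_injective f hf _ _ (fun q hq => ?_) fun q => ?_
  · simp only [hrange p hp, ite_self, Finset.sum_const_zero]
  · rw [minGap_comm, hrange q hq, ite_self]
  · simp only [hf.eq_iff, minGap_eq_of_add_const hΛf hΦf]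

end Ac

section Proto

variable {e : ℕ} {m : ℕ → ℕ}

theorem distinguished_proto {r s : ℕ} (hsr : s ≤ r) :
    Distinguished (proto r s : Pos e m → ℤ) := by
  rintro p q (hcol | ⟨hcol, hrow, -⟩)
  · have hstep : ((p.2 : ℕ) : ℤ) + 1 ≤ (q.2 : ℕ) := by exact_mod_cast hcol
    calc proto r s p ≤ (p.2 : ℕ) * r + r := by unfold proto; split_ifs <;> linarith
      _ = ((p.2 : ℕ) + 1) * r := by ring
      _ ≤ (q.2 : ℕ) * r := by gcongr
      _ ≤ proto r s q := by unfold proto; split_ifs <;> linarith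
  · unfold proto
    rw [hcol, if_neg hrow]
    split_ifs <;> linarith

theorem proto_nonneg (r s : ℕ) (p : Pos e m) : 0 ≤ proto r s p := by
  unfold proto
  split_ifs <;> positivity

theorem symb_nonneg (α : ℕ → ℕ → ℕ) (r s : ℕ) (p : Pos e m) : 0 ≤ symb α r s p :=
  add_nonneg (Nat.cast_nonneg _) (proto_nonneg r s p)

end Proto

section Rotation

variable {e M : ℕ}

/-- The position in the weight `b` symbol of the entry found at a given position of the rotated
weight `d` symbol: rotation brought row `i + 1` to row `i` and row `0` to row `e - 1`, and row `0`
is one entry longer in weight `b`, which moves its columns by one. -/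
def unrotatePos (p : Pos e (wD M)) : Pos e (wB M) :=
  if h : (p.1 : ℕ) + 1 < e then ⟨⟨p.1 + 1, h⟩, ⟨p.2, p.2.isLt⟩⟩
  else ⟨⟨0, p.1.pos⟩, ⟨p.2 + 1, Nat.succ_lt_succ p.2.isLt⟩⟩

theorem unrotatePos_row (p : Pos e (wD M)) :
    ((unrotatePos p).1 : ℕ) = if (p.1 : ℕ) + 1 < e then (p.1 : ℕ) + 1 else 0 := by
  unfold unrotatePos
  split <;> rfl

theorem unrotatePos_col (p : Pos e (wD M)) :
    ((unrotatePos p).2 : ℕ) = if (p.1 : ℕ) + 1 < e then (p.2 : ℕ) else p.2 + 1 := by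
  by_cases h : (p.1 : ℕ) + 1 < e
  · rw [unrotatePos, dif_pos h, if_pos h]
  · rw [unrotatePos, dif_neg h, if_neg h]

theorem unrotatePos_injective :
    Function.Injective (unrotatePos : Pos e (wD M) → Pos e (wB M)) := by
  intro p q h
  have hrow : ((unrotatePos p).1 : ℕ) = (unrotatePos q).1 := by rw [h]
  have hcol : ((unrotatePos p).2 : ℕ) = (unrotatePos q).2 := by rw [h]
  rw [unrotatePos_row, unrotatePos_row] at hrow
  rw [unrotatePos_col, unrotatePos_col] at hcol
  have hp := p.1.isLt
  have hq := q.1.isLt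
  apply pos_ext <;> split_ifs at hrow hcol <;> omega

theorem row_col_eq_zero_of_notMem_range_unrotatePos {q : Pos e (wB M)}
    (hq : q ∉ Set.range (unrotatePos : Pos e (wD M) → Pos e (wB M))) :
    (q.1 : ℕ) = 0 ∧ (q.2 : ℕ) = 0 := by
  contrapose! hq
  obtain ⟨⟨i, hi⟩, ⟨j, hj⟩⟩ := q
  dsimp only at hq hj
  rcases Nat.eq_zero_or_pos i with rfl | hi0
  · have hj0 : j ≠ 0 := hq rfl
    rw [wB, if_pos rfl] at hj
    refine ⟨⟨⟨e - 1, by omega⟩, ⟨j - 1, by unfold wD; omega⟩⟩, pos_ext ?_ ?_⟩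
    · rw [unrotatePos_row, if_neg (by dsimp only; omega)]
    · rw [unrotatePos_col, if_neg (by dsimp only; omega)]
      exact Nat.succ_pred hj0
  · rw [wB, if_neg hi0.ne'] at hj
    have hi1 : i - 1 + 1 = i := Nat.sub_add_cancel hi0
    refine ⟨⟨⟨i - 1, by omega⟩, ⟨j, hj⟩⟩, pos_ext ?_ ?_⟩
    · rw [unrotatePos_row, if_pos (by dsimp only; omega)]
      exact hi1
    · rw [unrotatePos_col, if_pos (by dsimp only; omega)]

theorem proto_unrotatePos (r : ℕ) (p : Pos e (wD M)) :
    proto r r (unrotatePos p) = proto r 0 p + r := by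
  unfold proto
  rw [unrotatePos_col, unrotatePos_row]
  by_cases h : (p.1 : ℕ) + 1 < e
  · simp [h]
  · simp [h, add_mul]

theorem symb_unrotatePos (α : ℕ → ℕ → ℕ) (r : ℕ) (p : Pos e (wD M)) :
    symb α r r (unrotatePos p) = symb (rotIter e 1 α) r 0 p + r := by
  unfold symb
  rw [proto_unrotatePos, ← add_assoc, unrotatePos_col, unrotatePos_row, rotIter, if_pos p.1.isLt]
  by_cases h : (p.1 : ℕ) + 1 < e
  · simp [h, wB, wD, Nat.mod_eq_of_lt h]
  · have hlast : (p.1 : ℕ) + 1 = e := by omega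
    simp [hlast, wB, wD, Nat.sub_sub, add_comm]

end Rotation

theorem stmt_3_general (e M r : ℕ) {α : ℕ → ℕ → ℕ} (hα : α 0 M = 0) :
    ac (fun p : Pos e (wB M) => symb α r r p) (fun p => proto r r p) =
      ac (fun p : Pos e (wD M) => symb (rotIter e 1 α) r 0 p) (fun p => proto r 0 p) := by
  symm
  refine ac_eq_ac_of_injective (distinguished_proto r.zero_le) (distinguished_proto le_rfl)
    unrotatePos_injective (symb_unrotatePos α r) (proto_unrotatePos r) fun p hp q => ?_
  obtain ⟨hrow, hcol⟩ := row_col_eq_zero_of_notMem_range_unrotatePos hp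
  have hproto : proto r r p = 0 := by simp [proto, hrow, hcol]
  have hsymb : symb α r r p = 0 := by simp [symb, hproto, hrow, hcol, wB, hα]
  exact minGap_eq_zero_of_left hsymb hproto (symb_nonneg α r r q) (proto_nonneg r r q)

/-- For every `e`-multipartition `α` of `n` and every integer
`r ≥ 0`, `a^c(Λ^{r,r}_b(α)) = a^c(r(Λ^{r,0}_d(α)))`, where `r` denotes the rotation
of symbols.  (Since the protosymbol `Φ^{r,0}` of weight `d` has all rows equal, it
is invariant under rotation, so `a^c` of the rotated symbol is computed with
respect to the same protosymbol.) -/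
theorem stmt_3 (e n M r : ℕ) (he : 1 ≤ e)
    (α : ℕ → ℕ → ℕ)
    (hpart : ∀ i, Antitone (α i))
    (hsupp : ∀ i j, e ≤ i ∨ M ≤ j → α i j = 0)
    (hsum : (∑ i ∈ Finset.range e, ∑ j ∈ Finset.range M, α i j) = n) :
    ac (fun p : Pos e (wB M) => symb α r r p) (fun p => proto r r p) =
      ac (fun p : Pos e (wD M) => symb (rotIter e 1 α) r 0 p) (fun p => proto r 0 p) :=
  stmt_3_general e M r (hsupp 0 M (Or.inr le_rfl))

end Spets
end

section
/- Let α be an e-multipartition of n and r ≥ s ≥ 0 integers. The symbol Λ^{r,s}_b(α) is distinguished if and only if for all nonnegative integers r′, r″, s′, s″ with 0 ≤ s′ ≤ r′, 0 ≤ s″ ≤ r″, r′ + r″ = r and s′ + s″ = s, there exist nonnegative integers n′, n″ with n′ + n″ = n and e-multipartitions β′ of n′ and β″ of n″ such that α = β′ + β″ and both Λ^{r′,s′}_b(β′) and Λ^{r″,s″}_b(β″) are distinguished. -/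
namespace Spets

/-!
Choose an `r`-periodic set `A` of natural numbers having `s'` elements below `s` and `r'` elements
below `r`, and label the boxes of a part by consecutive natural numbers starting from its entry in
the protosymbol. Counting in each part of `α` the boxes with label in `A`, respectively outside `A`,
gives `β'` and `β''`. By periodicity the labels of all parts of a row may start at the same value
(`0` or `s`), so counting preserves the order of the parts. Moreover an entry of the symbol of `β'`
is the number of elements of `A` below the corresponding entry of the symbol of `α`; this number
is monotone in the entry, hence being distinguished is inherited.
-/

theorem count_add_count_not (p : ℕ → Prop) [DecidablePred p] (n : ℕ) :
    Nat.count p n + Nat.count (fun k => ¬p k) n = n := by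
  simp only [Nat.count_eq_card_filter_range, Finset.card_filter_add_card_filter_not,
    Finset.card_range]

theorem count_add_mul_of_periodic {p : ℕ → Prop} [DecidablePred p] {r : ℕ}
    (hp : Function.Periodic p r) (a k : ℕ) :
    Nat.count p (a + k * r) = Nat.count p a + k * Nat.count p r := by
  induction k with
  | zero => simp
  | succ k ih =>
    have period_shift (b : ℕ) : Nat.count p (b + r) = Nat.count p b + Nat.count p r := by
      simp only [Nat.count_add', hp _]
    rw [add_one_mul, ← add_assoc, period_shift, ih]
    ring

/-- The `r`-periodic set which, in each period `[0, r)`, consists of the first `s'` elements of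
`[0, s)` and the first `r' - s'` elements of `[s, r)`. -/
def IsMarked (r s r' s' k : ℕ) : Prop :=
  k % r < s' ∨ s ≤ k % r ∧ k % r + s' < s + r'

instance (r s r' s' : ℕ) : DecidablePred (IsMarked r s r' s') := fun k => by
  unfold IsMarked; infer_instance

section IsMarked

variable {r s r' s' : ℕ}

theorem periodic_isMarked : Function.Periodic (IsMarked r s r' s') r := fun k => by
  simp only [IsMarked, Nat.add_mod_right]

theorem count_isMarked_offset (hs : s ≤ r) (hs' : s' ≤ s) :
    Nat.count (IsMarked r s r' s') s = s' := by
  have marked_below : {k ∈ Finset.range s | IsMarked r s r' s' k} = Finset.range s' := by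
    ext k
    simp only [Finset.mem_filter, Finset.mem_range]
    refine ⟨fun ⟨_, h⟩ => ?_, fun hk => ⟨by lia, ?_⟩⟩
    · rw [IsMarked, Nat.mod_eq_of_lt (by lia)] at h
      lia
    · rw [IsMarked, Nat.mod_eq_of_lt (by lia)]
      exact Or.inl hk
  rw [Nat.count_eq_card_filter_range, marked_below, Finset.card_range]

theorem count_isMarked_period (hs' : s' ≤ s) (hr' : s' ≤ r') (h : s + r' ≤ r + s') :
    Nat.count (IsMarked r s r' s') r = r' := by
  have marked_below : {k ∈ Finset.range r | IsMarked r s r' s' k} =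
      Finset.range s' ∪ Finset.Ico s (s + (r' - s')) := by
    ext k
    simp only [Finset.mem_filter, Finset.mem_range, Finset.mem_union, Finset.mem_Ico]
    refine ⟨fun ⟨hk, h⟩ => ?_, fun hk => ⟨by lia, ?_⟩⟩
    · rw [IsMarked, Nat.mod_eq_of_lt hk] at h
      lia
    · rw [IsMarked, Nat.mod_eq_of_lt (by lia)]
      lia
  have disjoint_blocks : Disjoint (Finset.range s') (Finset.Ico s (s + (r' - s'))) :=
    Finset.disjoint_left.2 fun k hk hk' => by
      simp only [Finset.mem_range, Finset.mem_Ico] at hk hk'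
      lia
  rw [Nat.count_eq_card_filter_range, marked_below, Finset.card_union_of_disjoint disjoint_blocks,
    Finset.card_range, Nat.card_Ico]
  lia

end IsMarked

/-- The first entry of row `i` of the protosymbol `Φ^{r,s}`, for any `r`. -/
def rowOffset (s i : ℕ) : ℕ := if i = 0 then 0 else s

/-- The multipartition whose `(i, j)` part counts the boxes of `α i j` with label in `p`, the boxes
of every part of row `i` being labelled `rowOffset s i`, `rowOffset s i + 1`, …. -/
def markedPart (p : ℕ → Prop) [DecidablePred p] (s : ℕ) (α : ℕ → ℕ → ℕ) (i j : ℕ) : ℕ :=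
  Nat.count (fun k => p (rowOffset s i + k)) (α i j)

theorem symb_eq_natCast (α : ℕ → ℕ → ℕ) (r s : ℕ) {e : ℕ} {m : ℕ → ℕ} (x : Pos e m) :
    symb α r s x = ((rowOffset s x.1 + α x.1 (m x.1 - 1 - x.2) + x.2 * r : ℕ) : ℤ) := by
  simp only [symb, proto, rowOffset]
  push_cast
  ring

theorem symb_add {α β γ : ℕ → ℕ → ℕ} (hα : ∀ i j, α i j = β i j + γ i j) (r s r' s' : ℕ)
    {e : ℕ} {m : ℕ → ℕ} (x : Pos e m) :
    symb α (r + r') (s + s') x = symb β r s x + symb γ r' s' x := by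
  simp only [symb, proto, hα]
  split_ifs <;> push_cast <;> ring

theorem Distinguished.add {e : ℕ} {m : ℕ → ℕ} {Λ Λ' : Pos e m → ℤ} (h : Distinguished Λ)
    (h' : Distinguished Λ') : Distinguished (fun x => Λ x + Λ' x) :=
  fun x y hxy => add_le_add (h x y hxy) (h' x y hxy)

section markedPart

variable {p : ℕ → Prop} [DecidablePred p] {e n M r s : ℕ} {m : ℕ → ℕ} {α : ℕ → ℕ → ℕ}

theorem count_rowOffset (i : ℕ) :
    Nat.count p (rowOffset s i) = rowOffset (Nat.count p s) i := by
  unfold rowOffset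
  split_ifs <;> simp

theorem markedPart_add_markedPart_not (i j : ℕ) :
    markedPart p s α i j + markedPart (fun k => ¬p k) s α i j = α i j :=
  count_add_count_not _ _

theorem IsMP.markedPart (hα : IsMP e n M α) :
    IsMP e (∑ i ∈ Finset.range e, ∑ j ∈ Finset.range M, markedPart p s α i j) M
      (markedPart p s α) := by
  obtain ⟨anti, supp, -⟩ := hα
  refine ⟨fun i _ _ hjk => Nat.count_monotone _ (anti i hjk), fun i j h => ?_, rfl⟩
  rw [Spets.markedPart, supp i j h, Nat.count_zero]

theorem symb_markedPart (hp : Function.Periodic p r) (x : Pos e m) :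
    symb (markedPart p s α) (Nat.count p r) (Nat.count p s) x =
      Nat.count p (symb α r s x).toNat := by
  rw [symb_eq_natCast, symb_eq_natCast, Int.toNat_natCast, count_add_mul_of_periodic hp,
    Nat.count_add, count_rowOffset, markedPart]

theorem Distinguished.symb_markedPart (hp : Function.Periodic p r)
    (h : Distinguished (fun x : Pos e m => symb α r s x)) :
    Distinguished (fun x : Pos e m =>
      symb (markedPart p s α) (Nat.count p r) (Nat.count p s) x) := fun x y hxy => by
  simp only [Spets.symb_markedPart hp, Nat.cast_le]
  exact Nat.count_monotone p (Int.toNat_le_toNat (h x y hxy))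

end markedPart

theorem Distinguished.exists_split {e n M r' s' r'' s'' : ℕ} {m : ℕ → ℕ} {α : ℕ → ℕ → ℕ}
    (hα : IsMP e n M α)
    (hD : Distinguished (fun x : Pos e m => symb α (r' + r'') (s' + s'') x))
    (h' : s' ≤ r') (h'' : s'' ≤ r'') :
    ∃ (n' n'' : ℕ) (β' β'' : ℕ → ℕ → ℕ),
      n' + n'' = n ∧ IsMP e n' M β' ∧ IsMP e n'' M β'' ∧ (∀ i j, α i j = β' i j + β'' i j) ∧
      Distinguished (fun x : Pos e m => symb β' r' s' x) ∧
      Distinguished (fun x : Pos e m => symb β'' r'' s'' x) := by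
  let A := IsMarked (r' + r'') (s' + s'') r' s'
  have count_s : Nat.count A (s' + s'') = s' := count_isMarked_offset (by lia) (by lia)
  have count_r : Nat.count A (r' + r'') = r' := count_isMarked_period (by lia) h' (by lia)
  have count_not_s : Nat.count (fun k => ¬A k) (s' + s'') = s'' := by
    have := count_add_count_not A (s' + s'')
    lia
  have count_not_r : Nat.count (fun k => ¬A k) (r' + r'') = r'' := by
    have := count_add_count_not A (r' + r'')
    lia
  have hA : Function.Periodic A (r' + r'') := periodic_isMarked
  have not_hA : Function.Periodic (fun k => ¬A k) (r' + r'') := hA.comp Not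
  have hD' := hD.symb_markedPart hA
  have hD'' := hD.symb_markedPart not_hA
  rw [count_s, count_r] at hD'
  rw [count_not_s, count_not_r] at hD''
  refine ⟨_, _, _, _, ?_, hα.markedPart, hα.markedPart,
    fun i j => (markedPart_add_markedPart_not i j).symm, hD', hD''⟩
  simp only [← Finset.sum_add_distrib, markedPart_add_markedPart_not, hα.2.2]

theorem stmt_12_general {e n M r s : ℕ} (m : ℕ → ℕ) (hs : s ≤ r) {α : ℕ → ℕ → ℕ}
    (hα : IsMP e n M α) :
    Distinguished (fun p : Pos e m => symb α r s p) ↔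
      ∀ r' s' r'' s'' : ℕ, s' ≤ r' → s'' ≤ r'' → r' + r'' = r → s' + s'' = s →
        ∃ (n' n'' : ℕ) (β' β'' : ℕ → ℕ → ℕ),
          n' + n'' = n ∧
          IsMP e n' M β' ∧ IsMP e n'' M β'' ∧
          (∀ i j, α i j = β' i j + β'' i j) ∧
          Distinguished (fun p : Pos e m => symb β' r' s' p) ∧
          Distinguished (fun p : Pos e m => symb β'' r'' s'' p) := by
  constructor
  · rintro hD r' s' r'' s'' h' h'' rfl rfl
    exact hD.exists_split hα h' h''
  · intro split
    obtain ⟨-, -, β', β'', -, -, -, hadd, hD', hD''⟩ := split r s 0 0 hs le_rfl rfl rfl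
    simpa only [← symb_add hadd, add_zero] using hD'.add hD''

/-- **Statement 12.** Let `α` be an `e`-multipartition of `n` and `r ≥ s ≥ 0`
integers.  The symbol `Λ^{r,s}_b(α)` is distinguished if and only if for all
nonnegative integers `r′, r″, s′, s″` with `s′ ≤ r′`, `s″ ≤ r″`, `r′ + r″ = r` and
`s′ + s″ = s`, there exist `n′, n″` with `n′ + n″ = n` and `e`-multipartitions `β′`
of `n′` and `β″` of `n″` such that `α = β′ + β″` and both `Λ^{r′,s′}_b(β′)` and
`Λ^{r″,s″}_b(β″)` are distinguished. -/
theorem stmt_12 (e n M r s : ℕ) (he : 1 ≤ e) (hs : s ≤ r)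
    (α : ℕ → ℕ → ℕ)
    (hpart : ∀ i, Antitone (α i))
    (hsupp : ∀ i j, e ≤ i ∨ M ≤ j → α i j = 0)
    (hsum : (∑ i ∈ Finset.range e, ∑ j ∈ Finset.range M, α i j) = n) :
    Distinguished (fun p : Pos e (wB M) => symb α r s p) ↔
      ∀ r' s' r'' s'' : ℕ, s' ≤ r' → s'' ≤ r'' → r' + r'' = r → s' + s'' = s →
        ∃ (n' n'' : ℕ) (β' β'' : ℕ → ℕ → ℕ),
          n' + n'' = n ∧
          IsMP e n' M β' ∧ IsMP e n'' M β'' ∧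
          (∀ i j, α i j = β' i j + β'' i j) ∧
          Distinguished (fun p : Pos e (wB M) => symb β' r' s' p) ∧
          Distinguished (fun p : Pos e (wB M) => symb β'' r'' s'' p) :=
  stmt_12_general (wB M) hs ⟨hpart, hsupp, hsum⟩

end Spets
end

section
/- Let e > 2, ζ a primitive e-th root of unity, K = ℚ(ζ), and let complex conjugation on K send ζ to ζ^{−1}. In GL₂(K) set s_i = the matrix with rows (0, ζ^i) and (ζ^{−i}, 0), let W = G(e,e,2) = ⟨s_0, s_1⟩, and for each divisor d of e set G(d,d,2) = ⟨s_0, s_{e/d}⟩ and, when e/d is even, G′(d,d,2) = ⟨s_1, s_{e/d+1}⟩. Let V₀ = { v₁e₁ − v̄₁e₂ : v₁ ∈ K } and L₀ = { v₁e₁ − v̄₁e₂ : v₁ ∈ ℤ_K }; both are W-stable, and for x ∈ V₀/L₀ let W^x_refl be the subgroup of W generated by the reflections of W fixing x. Then: G(d,d,2) is conjugate in W to some W^x_refl if and only if d = 1, d = e, or d is a prime power (dividing e); and, for e/d even, G′(d,d,2) is conjugate in W to some W^x_refl if and only if d = 1, or d < e/2 and d is a prime power. -/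
namespace Spets

variable (K : Type) [Field K]

/-- The general linear group of `K²`. -/
abbrev GL2K := Matrix.GeneralLinearGroup (Fin 2) K

/-- The reflection matrix `s_i` with rows `(0, ζ^i)` and `(ζ^{−i}, 0)`. -/
noncomputable def sMat (ζ : K) (i : ℕ) : Matrix (Fin 2) (Fin 2) K :=
  !![0, ζ ^ i; ζ⁻¹ ^ i, 0]

lemma sMat_mul_self (ζ : K) (hz : ζ ≠ 0) (i : ℕ) :
    sMat K ζ i * sMat K ζ i = 1 := by
  ext a b
  fin_cases a <;> fin_cases b <;>
    simp [sMat, Matrix.mul_apply, Fin.sum_univ_two, Matrix.one_apply,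
      mul_inv_cancel₀ (pow_ne_zero i hz), inv_mul_cancel₀ (pow_ne_zero i hz)]

/-- The reflection `s_i` of `G(e,e,2)` as an element of `GL₂(K)`
(it is an involution). -/
noncomputable def sU (ζ : K) (hz : ζ ≠ 0) (i : ℕ) : GL2K K :=
  ⟨sMat K ζ i, sMat K ζ i, sMat_mul_self K ζ hz i, sMat_mul_self K ζ hz i⟩

/-- `g` is a (pseudo-)reflection of `GL₂(K)`. -/
def IsRefl2 (g : GL2K K) : Prop :=
  g.val ≠ 1 ∧ Module.finrank K (LinearMap.range (g.val - 1).mulVecLin) = 1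

/-- membership in the lattice `L₀ = { v₁e₁ − v̄₁e₂ : v₁ ∈ ℤ_K }`. -/
def memL0 (conj : K →+* K) (w : Fin 2 → K) : Prop :=
  w 0 ∈ integralClosure ℤ K ∧ w 1 = -conj (w 0)

/-!
The reflections of `W` are the matrices `refl u` with `u ∈ ⟨ζ⟩`, and `refl u` fixes the class of
`(v, -v̄)` exactly when `v + u v̄` is integral. If this holds for `u = t`, then it holds for `u` if
and only if `u / t` lies in `S = {s ∈ ⟨ζ⟩ : (s - 1) v is integral}`, so that `W^x_refl` is the
dihedral group attached to the coset `t S`. With `m = e / d`, one therefore asks when some `v` with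
`v + t v̄` integral has `S = ⟨ζ ^ m⟩`, where `t = 1` for `G(d,d,2)` and `t = ζ` for `G′(d,d,2)`.

* If `d ≠ 1` is not a prime power, `ζ ^ m - 1` is a unit. Hence `v` is integral and `S = ⟨ζ⟩`.
* If `d` is a prime power, take `v = a / (ζ ^ m - 1)` with `a = 1` for `t = 1` and `a = 1 + ζ` for
  `t = ζ`. It works because `ζ ^ m - 1` does not divide `a (ζ ^ n - 1)` when `m / n` is prime,
  except for `t = ζ` and `m = 2`.
* If `t = ζ` and `m = 2`, then `b̄ ≡ b` modulo `ζ⁻¹ - ζ` for every integral `b`, which forces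
  `ζ ∈ S`.
* If `d = 1`, take `v = a / (2 e²)` where `t ā = -a` and `a` divides `e`.
-/

section RootsOfUnity

open Polynomial

variable {R : Type*} [CommRing R]

lemma sub_one_dvd_add_one_of_pow_eq_neg_one {k : ℕ} {η : R} (hη : η ^ k = -1) :
    η - 1 ∣ η + 1 := by
  have hdvd := sub_one_dvd_pow_sub_one η (k + 1)
  rwa [pow_succ, hη, neg_one_mul, ← dvd_neg, neg_sub, sub_neg_eq_add, add_comm] at hdvd

lemma add_one_dvd_sub_one_of_pow_eq_neg_one {k : ℕ} {η : R} (hk : Even k) (hη : η ^ k = -1) :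
    η + 1 ∣ η - 1 := by
  have hpow : (-η) ^ (k + 1) = η := by rw [pow_succ, hk.neg_pow, hη, neg_one_mul, neg_neg]
  have hdvd := sub_one_dvd_pow_sub_one (-η) (k + 1)
  rwa [hpow, ← neg_dvd, neg_sub, sub_neg_eq_add, add_comm] at hdvd

lemma isUnit_sq_sub_one_of_isUnit_add_one {k : ℕ} {η : R} (hη : η ^ k = -1)
    (hunit : IsUnit (η + 1)) : IsUnit (η ^ 2 - 1) := by
  rw [← one_pow 2, sq_sub_sq]
  exact hunit.mul (isUnit_of_dvd_unit (sub_one_dvd_add_one_of_pow_eq_neg_one hη) hunit)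

variable [IsDomain R]

lemma sub_one_dvd_natCast {n : ℕ} {η : R} (hη : η ^ n = 1) (hne : η ≠ 1) : η - 1 ∣ (n : R) := by
  have hgeom : ∑ i ∈ Finset.range n, η ^ i = 0 := by
    refine (mul_eq_zero.1 ?_).resolve_right (sub_ne_zero.2 hne)
    rw [geom_sum_mul, hη, sub_self]
  simpa [eval_finsetSum, hgeom] using sub_dvd_eval_sub η 1 (∑ i ∈ Finset.range n, X ^ i)

lemma isUnit_sub_one_of_not_isPrimePow {n : ℕ} {η : R} (hη : IsPrimitiveRoot η n) (hn : 1 < n)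
    (hnot : ¬ IsPrimePow n) : IsUnit (η - 1) := by
  have heval : eval 1 (cyclotomic n R) = 1 := by
    refine eval_one_cyclotomic_not_prime_pow fun {p} hp k hk ↦ ?_
    obtain rfl | hk0 := Nat.eq_zero_or_pos k
    · simp only [pow_zero] at hk
      omega
    · exact hnot ((isPrimePow_nat_iff n).2 ⟨p, k, hp, hk0, hk⟩)
  rw [cyclotomic_eq_prod_X_sub_primitiveRoots hη, eval_prod] at heval
  have hfactor := IsUnit.prod_iff.1 (heval ▸ isUnit_one) η
    ((mem_primitiveRoots (zero_lt_one.trans hn)).2 hη)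
  rwa [eval_sub, eval_X, eval_C, ← IsUnit.neg_iff, neg_sub] at hfactor

lemma not_isUnit_sub_one_of_isPrimePow {d : ℕ} {η : R} (hd : IsPrimePow d)
    (hprimes : ∀ p : ℕ, p.Prime → ¬ IsUnit (p : R)) (hη : IsPrimitiveRoot η d) :
    ¬ IsUnit (η - 1) := by
  intro hunit
  obtain ⟨p, k, hp, hk, rfl⟩ := (isPrimePow_nat_iff d).1 hd
  obtain ⟨k, rfl⟩ := Nat.exists_eq_add_one.2 hk
  have := Fact.mk hp
  have : NeZero (p ^ (k + 1)) := ⟨(pow_pos hp.pos _).ne'⟩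
  have heval := eval_one_cyclotomic_prime_pow (R := R) (p := p) k
  rw [cyclotomic_eq_prod_X_sub_primitiveRoots hη, eval_prod] at heval
  refine hprimes p hp (heval ▸ IsUnit.prod_iff.2 fun μ hμ ↦ ?_)
  have hμ := isPrimitiveRoot_of_mem_primitiveRoots hμ
  obtain ⟨i, -, rfl⟩ := hμ.eq_pow_of_pow_eq_one hη.pow_eq_one
  rw [eval_sub, eval_X, eval_C, ← IsUnit.neg_iff, neg_sub]
  exact isUnit_of_dvd_unit (sub_one_dvd_pow_sub_one μ i) hunit

-- `1 - η ^ p` is the product of the `1 - ω * η` with `ω ^ p = 1`, and each `ω` is a power of `η`.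
lemma sub_one_pow_dvd_pow_sub_one {n p : ℕ} {η : R} (hp : p ≠ 0)
    (hω : IsPrimitiveRoot (η ^ n) p) : (η - 1) ^ p ∣ η ^ p - 1 := by
  have : NeZero p := ⟨hp⟩
  have hfactor := hω.pow_sub_pow_eq_prod_sub_mul 1 η (Nat.pos_of_neZero p)
  rw [one_pow] at hfactor
  rw [← dvd_neg, neg_sub, hfactor]
  conv_lhs => rw [← hω.card_nthRootsFinset, ← Finset.prod_const]
  refine Finset.prod_dvd_prod_of_dvd _ _ fun μ hμ ↦ ?_
  rw [mem_nthRootsFinset (Nat.pos_of_neZero p)] at hμ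
  obtain ⟨i, -, rfl⟩ := hω.eq_pow_of_pow_eq_one hμ
  rw [← pow_mul, ← pow_succ, ← dvd_neg, neg_sub]
  exact sub_one_dvd_pow_sub_one η _

lemma isUnit_of_sq_dvd_self {x : R} (hx : x ≠ 0) (h : x ^ 2 ∣ x) : IsUnit x := by
  obtain ⟨c, hc⟩ := h
  refine IsUnit.of_mul_eq_one c (mul_left_cancel₀ hx ?_)
  linear_combination -hc

lemma isUnit_pow_sub_one_of_dvd_sub_one {n p : ℕ} {η : R} (hp : 1 < p)
    (hω : IsPrimitiveRoot (η ^ n) p) (hdvd : η ^ p - 1 ∣ η - 1) : IsUnit (η ^ p - 1) := by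
  have hη : η - 1 ≠ 0 := sub_ne_zero.2 fun h ↦ hω.ne_one hp (by rw [h, one_pow])
  have hsq : (η - 1) ^ 2 ∣ η - 1 := (pow_dvd_pow _ hp).trans <|
    (sub_one_pow_dvd_pow_sub_one (zero_lt_one.trans hp).ne' hω).trans hdvd
  exact isUnit_of_dvd_unit hdvd (isUnit_of_sq_dvd_self hη hsq)

lemma not_pow_sub_one_dvd_sub_one {d q : ℕ} {η : R} (hd : IsPrimePow d)
    (hprimes : ∀ p : ℕ, p.Prime → ¬ IsUnit (p : R)) (hq : 1 < q)
    (hη : IsPrimitiveRoot η (d * q)) : ¬ η ^ q - 1 ∣ η - 1 := by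
  intro hdvd
  have hpos : 0 < d * q := mul_pos hd.pos (zero_lt_one.trans hq)
  exact not_isUnit_sub_one_of_isPrimePow hd hprimes (hη.pow hpos (mul_comm d q)) <|
    isUnit_pow_sub_one_of_dvd_sub_one hq (hη.pow hpos rfl) hdvd

lemma pow_half_eq_neg_one {k : ℕ} {η : R} (hk : k ≠ 0) (hη : IsPrimitiveRoot η (k * 2)) :
    η ^ k = -1 :=
  (hη.pow (by omega) rfl).eq_neg_one_of_two_right

lemma isUnit_add_one_of_dvd_of_even {k n q : ℕ} {z : R} (hk : k ≠ 0) (hn : Even n)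
    (hn0 : n ≠ 0) (hq : q.Prime) (hz : IsPrimitiveRoot z (k * n * q))
    (hdvd : z ^ (n * q) - 1 ∣ (z + 1) * (z ^ n - 1)) : IsUnit (z + 1) := by
  have hpos : 0 < k * n * q := Nat.pos_of_ne_zero (mul_ne_zero (mul_ne_zero hk hn0) hq.ne_zero)
  have hη : IsPrimitiveRoot (z ^ n) (k * q) := hz.pow hpos (by ring)
  have hne : z ^ n - 1 ≠ 0 := hη.sub_one_ne_zero (one_lt_mul (Nat.pos_of_ne_zero hk) hq.one_lt)
  have hsq : z ^ 2 - 1 ∣ z ^ n - 1 := dvd_pow_sub_one_of_dvd hn.two_dvd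
  have hadd : z + 1 ∣ z ^ 2 - 1 := ⟨z - 1, by ring⟩
  have hpow : (z ^ n - 1) ^ (q - 1) ∣ z + 1 := by
    refine (mul_dvd_mul_iff_right hne).1 ?_
    rw [pow_sub_one_mul hq.ne_zero]
    refine (sub_one_pow_dvd_pow_sub_one (n := k) hq.ne_zero ?_).trans (pow_mul z n q ▸ hdvd)
    exact hη.pow (Nat.mul_pos (Nat.pos_of_ne_zero hk) hq.pos) rfl
  obtain rfl | hq2 := hq.eq_two_or_odd'
  · have hz1 : z ^ 2 - 1 ∣ z + 1 := hsq.trans (by simpa using hpow)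
    have hzne : z + 1 ≠ 0 := fun h ↦ hne (zero_dvd_iff.1 (h ▸ hadd.trans hsq))
    have hunit : IsUnit (z - 1) := by
      refine isUnit_of_dvd_one ((mul_dvd_mul_iff_left hzne).1 ?_)
      rwa [mul_one, ← sq_sub_sq, one_pow]
    exact isUnit_of_dvd_unit (add_one_dvd_sub_one_of_pow_eq_neg_one (hn.mul_left k)
      (pow_half_eq_neg_one (mul_ne_zero hk hn0) hz)) hunit
  · have hself : (z ^ n - 1) ^ 2 ∣ z ^ n - 1 :=
      (pow_dvd_pow _ (by have := hq.two_le; grind)).trans (hpow.trans (hadd.trans hsq))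
    exact isUnit_of_dvd_unit (hadd.trans hsq) (isUnit_of_sq_dvd_self hne hself)

-- `-z` satisfies `(-z) ^ n - 1 ∣ -z - 1`, so that both sides are units.
lemma isUnit_pow_sub_one_of_dvd_of_odd {k n : ℕ} {z : R} (hk : k ≠ 0) (hn : Odd n) (hn1 : n ≠ 1)
    (hz : IsPrimitiveRoot z (k * n * 2))
    (hdvd : z ^ (n * 2) - 1 ∣ (z + 1) * (z ^ n - 1)) : IsUnit (z ^ (n * 2) - 1) := by
  have hn0 : 0 < n := hn.pos
  have hpos : 0 < k * n * 2 := by positivity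
  have hη : IsPrimitiveRoot (z ^ n) (k * 2) := hz.pow hpos (by ring)
  have hω : IsPrimitiveRoot ((-z) ^ (2 * k)) n := by
    rw [(even_two_mul k).neg_pow]
    exact hz.pow hpos (by ring)
  have hne : z ^ n - 1 ≠ 0 := hη.sub_one_ne_zero (by omega)
  have hneg : (-z) ^ n - 1 ∣ -z - 1 := by
    rw [hn.neg_pow, ← neg_add', ← neg_add', neg_dvd, dvd_neg]
    refine (mul_dvd_mul_iff_right hne).1 ?_
    rwa [← one_pow 2, pow_mul, sq_sub_sq, one_pow] at hdvd
  have hunit := isUnit_pow_sub_one_of_dvd_sub_one (by omega) hω hneg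
  rw [hn.neg_pow, ← neg_add', IsUnit.neg_iff] at hunit
  rw [pow_mul]
  exact isUnit_sq_sub_one_of_isUnit_add_one (pow_half_eq_neg_one hk hη) hunit

lemma not_pow_sub_one_dvd_add_one_mul_pow_sub_one {d n q : ℕ} {z : R} (hd : IsPrimePow d)
    (hprimes : ∀ p : ℕ, p.Prime → ¬ IsUnit (p : R)) (hq : q.Prime) (heven : Even (n * q))
    (hlt : 2 < n * q) (hz : IsPrimitiveRoot z (d * n * q)) :
    ¬ z ^ (n * q) - 1 ∣ (z + 1) * (z ^ n - 1) := by
  intro hdvd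
  have hn0 : n ≠ 0 := by rintro rfl; simp at hlt
  have hpos : 0 < d * n * q :=
    Nat.pos_of_ne_zero (mul_ne_zero (mul_ne_zero hd.ne_zero hn0) hq.ne_zero)
  obtain hn | hn := Nat.even_or_odd n
  · have hunit := isUnit_add_one_of_dvd_of_even hd.ne_zero hn hn0 hq hz hdvd
    rw [hunit.dvd_mul_left, pow_mul] at hdvd
    exact not_pow_sub_one_dvd_sub_one hd hprimes hq.one_lt (hz.pow hpos (by ring)) hdvd
  · obtain rfl : q = 2 := hq.even_iff.1 ((Nat.even_mul.1 heven).resolve_left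
      (Nat.not_even_iff_odd.2 hn))
    exact not_isUnit_sub_one_of_isPrimePow hd hprimes (hz.pow hpos (by ring))
      (isUnit_pow_sub_one_of_dvd_of_odd hd.ne_zero hn (by omega) hz hdvd)

end RootsOfUnity

section Dihedral

variable {K}

/-- The reflection with rows `(0, u)` and `(u⁻¹, 0)`; the reflections `s_i` of the paper are
`refl (ζ ^ i)`. -/
def refl (u : Kˣ) : GL2K K where
  val := !![0, ↑u; ↑u⁻¹, 0]
  inv := !![0, ↑u; ↑u⁻¹, 0]
  val_inv := by simp [Matrix.one_fin_two]
  inv_val := by simp [Matrix.one_fin_two]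

/-- The diagonal matrix with entries `u` and `u⁻¹`, as a homomorphism in `u`; these are the
products of two reflections `refl`. -/
def rot : Kˣ →* GL2K K where
  toFun u :=
    { val := !![↑u, 0; 0, ↑u⁻¹]
      inv := !![↑u⁻¹, 0; 0, ↑u]
      val_inv := by simp [Matrix.one_fin_two]
      inv_val := by simp [Matrix.one_fin_two] }
  map_one' := Units.ext (by simp [Matrix.one_fin_two])
  map_mul' u v := Units.ext (by simp [mul_comm])

lemma coe_refl (u : Kˣ) : (refl u).val = !![0, ↑u; ↑u⁻¹, 0] := rfl

lemma coe_rot (u : Kˣ) : (rot u).val = !![↑u, 0; 0, ↑u⁻¹] := rfl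

lemma refl_mul_refl (u v : Kˣ) : refl u * refl v = rot (u / v) :=
  Units.ext (by rw [Units.val_mul, coe_refl, coe_refl, coe_rot]; simp [div_eq_mul_inv, mul_comm])

lemma rot_mul_refl (u v : Kˣ) : rot u * refl v = refl (u * v) :=
  Units.ext (by simp [coe_refl, coe_rot, mul_comm])

lemma refl_mul_rot (u v : Kˣ) : refl u * rot v = refl (u / v) :=
  Units.ext (by simp [coe_refl, coe_rot, div_eq_mul_inv, mul_comm])

lemma refl_inv (u : Kˣ) : (refl u)⁻¹ = refl u :=
  inv_eq_of_mul_eq_one_right (by rw [refl_mul_refl, div_self', map_one])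

lemma refl_injective : Function.Injective (refl : Kˣ → GL2K K) := fun u v h ↦ by
  simpa [coe_refl, Units.ext_iff] using congr_arg (fun g : GL2K K ↦ g.val 0 1) h

lemma rot_injective : Function.Injective (rot : Kˣ → GL2K K) := fun u v h ↦ by
  simpa [coe_rot, Units.ext_iff] using congr_arg (fun g : GL2K K ↦ g.val 0 0) h

lemma refl_ne_rot (u v : Kˣ) : refl u ≠ rot v := fun h ↦ by
  simpa [coe_refl, coe_rot] using congr_arg (fun g : GL2K K ↦ g.val 0 1) h

/-- The generalized dihedral group of the diagonal matrices `rot u` with `u ∈ H` and the reflections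
`refl u` with `u` in the coset of `t` modulo `H`. The groups `G(d,d,2)` and `G′(d,d,2)` are of this
form with `H` generated by `ζ ^ (e / d)`, and `t = 1`, respectively `t = ζ`. -/
def dihedral (t : Kˣ) (H : Subgroup Kˣ) : Subgroup (GL2K K) where
  carrier := {g | (∃ u ∈ H, rot u = g) ∨ ∃ u, u / t ∈ H ∧ refl u = g}
  one_mem' := Or.inl ⟨1, H.one_mem, map_one rot⟩
  mul_mem' := by
    rintro _ _ (⟨u, hu, rfl⟩ | ⟨u, hu, rfl⟩) (⟨v, hv, rfl⟩ | ⟨v, hv, rfl⟩)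
    · exact .inl ⟨u * v, mul_mem hu hv, map_mul rot u v⟩
    · exact .inr ⟨u * v, mul_div_assoc u v t ▸ mul_mem hu hv, (rot_mul_refl u v).symm⟩
    · exact .inr ⟨u / v, div_right_comm u v t ▸ div_mem hu hv, (refl_mul_rot u v).symm⟩
    · exact .inl ⟨u / v, div_div_div_cancel_right u v t ▸ div_mem hu hv,
        (refl_mul_refl u v).symm⟩
  inv_mem' := by
    rintro _ (⟨u, hu, rfl⟩ | ⟨u, hu, rfl⟩)
    · exact .inl ⟨u⁻¹, inv_mem hu, map_inv rot u⟩
    · exact .inr ⟨u, hu, (refl_inv u).symm⟩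

variable {t u : Kˣ} {H : Subgroup Kˣ}

lemma rot_mem_dihedral : rot u ∈ dihedral t H ↔ u ∈ H := by
  constructor
  · rintro (⟨v, hv, h⟩ | ⟨v, -, h⟩)
    · exact rot_injective h ▸ hv
    · exact absurd h (refl_ne_rot v u)
  · exact fun hu ↦ .inl ⟨u, hu, rfl⟩

lemma refl_mem_dihedral : refl u ∈ dihedral t H ↔ u / t ∈ H := by
  constructor
  · rintro (⟨v, -, h⟩ | ⟨v, hv, h⟩)
    · exact absurd h.symm (refl_ne_rot u v)
    · exact refl_injective h ▸ hv
  · exact fun hu ↦ .inr ⟨u, hu, rfl⟩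

lemma dihedral_le {G : Subgroup (GL2K K)} (ht : refl t ∈ G) (hH : ∀ u ∈ H, rot u ∈ G) :
    dihedral t H ≤ G := by
  rintro _ (⟨u, hu, rfl⟩ | ⟨u, hu, rfl⟩)
  · exact hH u hu
  · rw [← div_mul_cancel u t, ← rot_mul_refl]
    exact mul_mem (hH _ hu) ht

lemma closure_image_refl (t : Kˣ) (H : Subgroup Kˣ) :
    Subgroup.closure (refl '' {u | u / t ∈ H}) = dihedral t H := by
  apply le_antisymm
  · rw [Subgroup.closure_le]
    rintro _ ⟨u, hu, rfl⟩
    exact refl_mem_dihedral.2 hu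
  · have hmem {u : Kˣ} (hu : u / t ∈ H) :
        refl u ∈ Subgroup.closure (refl '' {u | u / t ∈ H}) :=
      Subgroup.subset_closure ⟨u, hu, rfl⟩
    have ht := hmem (u := t) (by simp)
    refine dihedral_le ht fun u hu ↦ ?_
    rw [← mul_div_cancel_right u t, ← refl_mul_refl]
    exact mul_mem (hmem (by simpa using hu)) ht

lemma closure_refl_pair (t h : Kˣ) :
    Subgroup.closure {refl t, refl (h * t)} = dihedral t (Subgroup.zpowers h) := by
  apply le_antisymm
  · rw [Subgroup.closure_le]
    rintro _ (rfl | rfl)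
    · exact refl_mem_dihedral.2 (by simp)
    · exact refl_mem_dihedral.2 (by simp)
  · have ht : refl t ∈ Subgroup.closure {refl t, refl (h * t)} := Subgroup.subset_closure (by simp)
    have hht : refl (h * t) ∈ Subgroup.closure {refl t, refl (h * t)} :=
      Subgroup.subset_closure (by simp)
    refine dihedral_le ht ?_
    rintro _ ⟨k, rfl⟩
    have hrot : rot (h ^ k) = (refl (h * t) * refl t) ^ k := by
      rw [refl_mul_refl, mul_div_cancel_right, map_zpow]
    exact hrot ▸ zpow_mem (mul_mem hht ht) k

lemma map_conj_rot_dihedral (u t : Kˣ) (H : Subgroup Kˣ) :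
    (dihedral t H).map (MulAut.conj (rot u)).toMonoidHom = dihedral (u ^ 2 * t) H := by
  have hconj (v : Kˣ) : (MulAut.conj (rot u)).toMonoidHom (refl v) = refl (u ^ 2 * v) := by
    simp [← map_inv, rot_mul_refl, refl_mul_rot, pow_two, mul_right_comm]
  rw [← closure_image_refl, ← closure_image_refl, MonoidHom.map_closure, Set.image_image]
  simp only [hconj]
  rw [← Set.image_image refl (u ^ 2 * ·)]
  simp [Set.image_mul_left, ← div_eq_inv_mul, div_div]

lemma exists_map_conj_dihedral_eq {Γ : Subgroup Kˣ} (ht : t ∈ Γ) {w : GL2K K}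
    (hw : w ∈ dihedral 1 Γ) :
    ∃ u ∈ Γ, (dihedral t H).map (MulAut.conj w).toMonoidHom = dihedral (u ^ 2 * t) H := by
  obtain ⟨u, hu, rfl⟩ | ⟨u, hu, rfl⟩ := hw
  · exact ⟨u, hu, map_conj_rot_dihedral u t H⟩
  · refine ⟨u / t, div_mem (div_one u ▸ hu) ht, ?_⟩
    have hself : (dihedral t H).map (MulAut.conj (refl t)).toMonoidHom = dihedral t H :=
      Subgroup.conj_smul_eq_self_of_mem (refl_mem_dihedral.2 (by simp))
    have hsplit : refl u = rot (u / t) * refl t := by rw [rot_mul_refl, div_mul_cancel]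
    have hcomp : (MulAut.conj (refl u)).toMonoidHom =
        (MulAut.conj (rot (u / t))).toMonoidHom.comp (MulAut.conj (refl t)).toMonoidHom := by
      rw [hsplit, map_mul]
      rfl
    rw [hcomp, ← Subgroup.map_map, hself, map_conj_rot_dihedral]

lemma isRefl2_refl (u : Kˣ) : IsRefl2 K (refl u) := by
  have hvec : (refl u).val - 1 = Matrix.vecMulVec ![-1, (u⁻¹ : K)] ![1, -(u : K)] := by
    ext i j
    fin_cases i <;> fin_cases j <;> simp [coe_refl, Matrix.vecMulVec_apply]
  have hne : (refl u).val - 1 ≠ 0 := fun h ↦ by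
    simpa [coe_refl] using congr_arg (fun A : Matrix (Fin 2) (Fin 2) K ↦ A 0 0) h
  refine ⟨sub_ne_zero.1 hne, le_antisymm (hvec ▸ Matrix.rank_vecMulVec_le _ _) ?_⟩
  rwa [Submodule.one_le_finrank_iff, ne_eq, LinearMap.range_eq_bot, ← Matrix.toLin'_apply',
    LinearEquiv.map_eq_zero_iff]

lemma not_isRefl2_rot (u : Kˣ) : ¬ IsRefl2 K (rot u) := by
  rintro ⟨hne, hrank⟩
  have hdet : ((rot u).val - 1).det ≠ 0 := by
    have hu : u ≠ 1 := by rintro rfl; exact hne (by simp)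
    simp only [coe_rot, Matrix.det_fin_two, Matrix.sub_apply]
    simpa [sub_eq_zero] using hu
  have hrank_two := Matrix.rank_of_det_ne_zero hdet
  rw [Matrix.rank, hrank, Fintype.card_fin] at hrank_two
  omega

end Dihedral

section Lattice

variable {K} {conj : K →+* K}

lemma isIntegral_map_iff (hconj : Function.Involutive conj) {x : K} :
    IsIntegral ℤ (conj x) ↔ IsIntegral ℤ x :=
  ⟨fun h ↦ hconj x ▸ h.map conj.toIntAlgHom, fun h ↦ h.map conj.toIntAlgHom⟩

variable (conj) in
/-- The integral units `u` of norm one for the involution `conj`, that is with `conj u = u⁻¹`;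
they include the roots of unity that `conj` inverts. -/
def unitaryUnits : Subgroup Kˣ where
  carrier := {u | IsIntegral ℤ (u : K) ∧ conj u = ↑u⁻¹}
  one_mem' := ⟨isIntegral_one, by simp⟩
  mul_mem' := fun ⟨hu, hu'⟩ ⟨hv, hv'⟩ ↦ ⟨by simpa using hu.mul hv, by simp [hu', hv', mul_comm]⟩
  inv_mem' := fun {u} ⟨hu, hu'⟩ ↦ ⟨hu' ▸ hu.map conj.toIntAlgHom, by simp [hu']⟩

variable {u : Kˣ}

lemma isIntegral_unitary_mul_iff (hu : u ∈ unitaryUnits conj) {x : K} :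
    IsIntegral ℤ (u * x) ↔ IsIntegral ℤ x :=
  ⟨fun h ↦ by simpa using (inv_mem hu).1.mul h, hu.1.mul⟩

variable (conj) in
/-- The unitary units `u` that fix the class of `v` modulo the ring of integers. -/
def latticeStabilizer (v : K) : Subgroup Kˣ where
  carrier := {u | u ∈ unitaryUnits conj ∧ IsIntegral ℤ ((u - 1) * v)}
  one_mem' := ⟨one_mem _, by simpa using isIntegral_zero⟩
  mul_mem' := fun {u u'} ⟨hu, huv⟩ ⟨hu', huv'⟩ ↦ ⟨mul_mem hu hu', by
    have heq : (↑(u * u') - 1) * v = u * ((u' - 1) * v) + (u - 1) * v := by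
      push_cast
      ring
    exact heq ▸ (hu.1.mul huv').add huv⟩
  inv_mem' := fun {u} ⟨hu, huv⟩ ↦ ⟨inv_mem hu, by
    have heq : (↑u⁻¹ - 1) * v = -(↑u⁻¹ * ((u - 1) * v)) := by
      push_cast
      field_simp
      ring
    exact heq ▸ ((inv_mem hu).1.mul huv).neg⟩

lemma mem_latticeStabilizer (hu : u ∈ unitaryUnits conj) {v : K} :
    u ∈ latticeStabilizer conj v ↔ IsIntegral ℤ ((u - 1) * v) :=
  and_iff_right hu

lemma latticeStabilizer_unitary_mul (hu : u ∈ unitaryUnits conj) (v : K) :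
    latticeStabilizer conj (u * v) = latticeStabilizer conj v := by
  ext u'
  refine and_congr_right fun _ ↦ ?_
  rw [mul_left_comm, isIntegral_unitary_mul_iff hu]

lemma isIntegral_sub_one_mul_map_iff (hconj : Function.Involutive conj)
    (hu : u ∈ unitaryUnits conj) {v : K} :
    IsIntegral ℤ ((u - 1) * conj v) ↔ u ∈ latticeStabilizer conj v := by
  rw [← isIntegral_map_iff hconj, ← inv_mem_iff, mem_latticeStabilizer (inv_mem hu), map_mul,
    hconj, map_sub, map_one, hu.2]

lemma isIntegral_add_mul_map_iff (hconj : Function.Involutive conj) {t : Kˣ} {v : K}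
    (ht : t ∈ unitaryUnits conj) (hu : u ∈ unitaryUnits conj)
    (htv : IsIntegral ℤ (v + t * conj v)) :
    IsIntegral ℤ (v + u * conj v) ↔ u / t ∈ latticeStabilizer conj v := by
  have hsub : v + u * conj v = t * ((↑(u / t) - 1) * conj v) + (v + t * conj v) := by
    push_cast
    field_simp
    ring
  have hadd : IsIntegral ℤ (v + u * conj v) ↔ IsIntegral ℤ (t * ((↑(u / t) - 1) * conj v)) :=
    ⟨fun h ↦ by simpa [hsub] using h.sub htv, fun h ↦ hsub ▸ h.add htv⟩
  rw [hadd, isIntegral_unitary_mul_iff ht, isIntegral_sub_one_mul_map_iff hconj (div_mem hu ht)]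

lemma memL0_refl_iff (hconj : Function.Involutive conj) (hu : conj u = ↑u⁻¹) {v : K} :
    memL0 K conj ((refl u).val.mulVec ![v, -conj v] - ![v, -conj v]) ↔
      IsIntegral ℤ (v + u * conj v) := by
  have hfst : ((refl u).val.mulVec ![v, -conj v] - ![v, -conj v]) 0 = -(v + u * conj v) := by
    rw [neg_add_rev, ← sub_eq_add_neg]
    simp [coe_refl, mul_comm]
  have hsnd : ((refl u).val.mulVec ![v, -conj v] - ![v, -conj v]) 1 = conj (v + u * conj v) := by
    simp [coe_refl, hu, hconj v, add_comm, mul_comm]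
  rw [memL0, hfst, hsnd, map_neg, neg_neg, eq_self_iff_true, and_true, mem_integralClosure_iff,
    IsIntegral.neg_iff]

variable (conj) in
/-- The group `W^x_refl` for `x` the class of `v e₁ - conj v e₂` modulo `L₀`: it is generated by
the reflections of `W` that fix `x`. -/
def reflectionStabilizer (W : Subgroup (GL2K K)) (v : K) : Subgroup (GL2K K) :=
  Subgroup.closure {g | g ∈ W ∧ IsRefl2 K g ∧
    memL0 K conj (g.val.mulVec ![v, -conj v] - ![v, -conj v])}

variable {Γ : Subgroup Kˣ}

lemma reflectionStabilizer_dihedral (hconj : Function.Involutive conj)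
    (hΓ : Γ ≤ unitaryUnits conj) (v : K) :
    reflectionStabilizer conj (dihedral 1 Γ) v =
      Subgroup.closure (refl '' {u | u ∈ Γ ∧ IsIntegral ℤ (v + u * conj v)}) := by
  unfold reflectionStabilizer
  congr 1
  ext g
  constructor
  · rintro ⟨⟨u, -, rfl⟩ | ⟨u, hu, rfl⟩, hrefl, hmem⟩
    · exact absurd hrefl (not_isRefl2_rot u)
    · rw [div_one] at hu
      exact ⟨u, ⟨hu, (memL0_refl_iff hconj (hΓ hu).2).1 hmem⟩, rfl⟩
  · rintro ⟨u, ⟨hu, huv⟩, rfl⟩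
    exact ⟨refl_mem_dihedral.2 (by simpa using hu), isRefl2_refl u,
      (memL0_refl_iff hconj (hΓ hu).2).2 huv⟩

lemma reflectionStabilizer_eq_dihedral (hconj : Function.Involutive conj)
    (hΓ : Γ ≤ unitaryUnits conj) {t : Kˣ} (ht : t ∈ Γ) {v : K}
    (htv : IsIntegral ℤ (v + t * conj v)) :
    reflectionStabilizer conj (dihedral 1 Γ) v = dihedral t (latticeStabilizer conj v ⊓ Γ) := by
  rw [reflectionStabilizer_dihedral hconj hΓ, ← closure_image_refl]
  congr 2
  ext u
  have hdiv : u / t ∈ Γ ↔ u ∈ Γ := by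
    rw [div_eq_mul_inv, Γ.mul_mem_cancel_right (inv_mem ht)]
  simp only [Set.mem_ofPred_eq, Subgroup.mem_inf, hdiv, and_comm (b := u ∈ Γ)]
  exact and_congr_right fun hu ↦ isIntegral_add_mul_map_iff hconj (hΓ ht) (hΓ hu) htv

lemma exists_isIntegral_of_dihedral_eq (hconj : Function.Involutive conj)
    (hΓ : Γ ≤ unitaryUnits conj) {t : Kˣ} {H : Subgroup Kˣ} {v : K}
    (heq : dihedral t H = reflectionStabilizer conj (dihedral 1 Γ) v) :
    ∃ u ∈ Γ, IsIntegral ℤ (v + u * conj v) := by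
  by_contra! hnone
  have hempty : {u | u ∈ Γ ∧ IsIntegral ℤ (v + u * conj v)} = ∅ :=
    Set.eq_empty_of_forall_notMem fun u hu ↦ hnone u hu.1 hu.2
  rw [reflectionStabilizer_dihedral hconj hΓ, hempty, Set.image_empty, Subgroup.closure_empty]
    at heq
  have hrefl : refl t ∈ dihedral t H := refl_mem_dihedral.2 (by simp)
  rw [heq, Subgroup.mem_bot, ← map_one rot] at hrefl
  exact refl_ne_rot t 1 hrefl

-- Conjugation by `rot u` amounts to replacing `v` by `u * v`, which moves the reflections of the
-- conjugate back to the coset of `t`.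
lemma isConj_reflectionStabilizer_iff (hconj : Function.Involutive conj)
    (hΓ : Γ ≤ unitaryUnits conj) {t : Kˣ} (ht : t ∈ Γ) (H : Subgroup Kˣ) :
    (∃ (v : K) (w : GL2K K), w ∈ dihedral 1 Γ ∧
      (dihedral t H).map (MulAut.conj w).toMonoidHom =
        reflectionStabilizer conj (dihedral 1 Γ) v) ↔
    ∃ v : K, IsIntegral ℤ (v + t * conj v) ∧ latticeStabilizer conj v ⊓ Γ = H := by
  constructor
  · rintro ⟨v, w, hw, heq⟩
    obtain ⟨u, hu, hmap⟩ := exists_map_conj_dihedral_eq (H := H) ht hw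
    rw [hmap] at heq
    obtain ⟨s, hs, hsv⟩ := exists_isIntegral_of_dihedral_eq hconj hΓ heq
    rw [reflectionStabilizer_eq_dihedral hconj hΓ hs hsv] at heq
    have hH : latticeStabilizer conj v ⊓ Γ = H := by
      ext r
      rw [← rot_mem_dihedral (t := s), ← heq, rot_mem_dihedral]
    have hcoset : u ^ 2 * t / s ∈ latticeStabilizer conj v ⊓ Γ :=
      refl_mem_dihedral.1 (heq ▸ refl_mem_dihedral.2 (by simp))
    have hint : IsIntegral ℤ (v + ↑(u ^ 2 * t) * conj v) :=
      (isIntegral_add_mul_map_iff hconj (hΓ hs) (hΓ (mul_mem (pow_mem hu 2) ht)) hsv).2 hcoset.1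
    have hu' := inv_mem (hΓ hu)
    refine ⟨↑u⁻¹ * v, ?_, (latticeStabilizer_unitary_mul hu' v).symm ▸ hH⟩
    have hmul : ↑u⁻¹ * v + t * conj (↑u⁻¹ * v) = ↑u⁻¹ * (v + ↑(u ^ 2 * t) * conj v) := by
      rw [map_mul, hu'.2]
      push_cast
      field_simp
    exact hmul ▸ hu'.1.mul hint
  · rintro ⟨v, hv, rfl⟩
    refine ⟨v, 1, one_mem _, ?_⟩
    rw [reflectionStabilizer_eq_dihedral hconj hΓ ht hv, map_one]
    exact Subgroup.map_id _

end Lattice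

section Integrality

open NumberField Polynomial

variable {K}

lemma isIntegral_div_iff_dvd {x y : 𝓞 K} (hy : y ≠ 0) :
    IsIntegral ℤ ((x : K) / y) ↔ y ∣ x := by
  have hy' : (y : K) ≠ 0 := RingOfIntegers.coe_ne_zero_iff.2 hy
  constructor
  · intro h
    obtain ⟨c, hc⟩ := IsIntegralClosure.isIntegral_iff (A := 𝓞 K).1 h
    refine ⟨c, RingOfIntegers.coe_injective ?_⟩
    rw [map_mul, hc, RingOfIntegers.coe_eq_algebraMap, RingOfIntegers.coe_eq_algebraMap,
      mul_div_cancel₀ _ hy']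
  · rintro ⟨c, rfl⟩
    rw [RingOfIntegers.coe_eq_algebraMap (y * c), map_mul, mul_div_cancel_left₀ _ hy']
    exact c.isIntegral_coe

lemma not_isUnit_natCast_of_prime [CharZero K] (p : ℕ) (hp : p.Prime) :
    ¬ IsUnit (p : 𝓞 K) := by
  rw [← map_natCast (algebraMap ℤ (𝓞 K)), isUnit_map_iff]
  exact (Nat.prime_iff_prime_int.1 hp).not_isUnit

lemma not_isIntegral_one_half [CharZero K] : ¬ IsIntegral ℤ (1 / 2 : K) := by
  have hdvd : ¬ ((2 : ℕ) : 𝓞 K) ∣ 1 := fun h ↦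
    not_isUnit_natCast_of_prime 2 Nat.prime_two (isUnit_of_dvd_one h)
  have hnot := (isIntegral_div_iff_dvd (Nat.cast_ne_zero.2 two_ne_zero)).not.2 hdvd
  rwa [RingOfIntegers.coe_eq_algebraMap, RingOfIntegers.coe_eq_algebraMap, map_one, map_natCast,
    Nat.cast_ofNat] at hnot

lemma isIntegral_natCast_div_sub_one {n : ℕ} {η : K} (hn : n ≠ 0) (hη : η ^ n = 1) (hne : η ≠ 1) :
    IsIntegral ℤ (n / (η - 1)) := by
  obtain ⟨x, rfl⟩ := IsIntegralClosure.isIntegral_iff (R := ℤ) (A := 𝓞 K).1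
    (IsIntegral.of_pow hn.bot_lt (hη ▸ isIntegral_one))
  have hx : x ^ n = 1 := RingOfIntegers.coe_injective (by rw [map_pow, hη, map_one])
  have hx1 : x ≠ 1 := by
    rintro rfl
    exact hne (map_one _)
  simpa using (isIntegral_div_iff_dvd (sub_ne_zero.2 hx1)).2 (sub_one_dvd_natCast hx hx1)

lemma not_isIntegral_sub_one_div_pow_sub_one [CharZero K] {d q : ℕ} {η : K} (hd : IsPrimePow d)
    (hq : 1 < q) (hη : IsPrimitiveRoot η (d * q)) : ¬ IsIntegral ℤ ((η - 1) / (η ^ q - 1)) := by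
  have : NeZero (d * q) := ⟨mul_ne_zero hd.ne_zero (by omega)⟩
  have hη' := hη.toInteger_isPrimitiveRoot
  have hne : hη.toInteger ^ q - 1 ≠ 0 :=
    (hη'.pow (NeZero.pos _) (mul_comm d q)).sub_one_ne_zero hd.one_lt
  exact (isIntegral_div_iff_dvd hne).not.2
    (not_pow_sub_one_dvd_sub_one hd not_isUnit_natCast_of_prime hq hη')

lemma not_isIntegral_add_one_mul_pow_sub_one_div_pow_sub_one [CharZero K] {d n q : ℕ} {z : K}
    (hd : IsPrimePow d) (hq : q.Prime) (heven : Even (n * q)) (hlt : 2 < n * q)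
    (hz : IsPrimitiveRoot z (d * n * q)) :
    ¬ IsIntegral ℤ ((z + 1) * (z ^ n - 1) / (z ^ (n * q) - 1)) := by
  have : NeZero (d * n * q) := ⟨mul_assoc d n q ▸ mul_ne_zero hd.ne_zero (by omega)⟩
  have hz' := hz.toInteger_isPrimitiveRoot
  have hne : hz.toInteger ^ (n * q) - 1 ≠ 0 :=
    (hz'.pow (NeZero.pos _) (by ring)).sub_one_ne_zero hd.one_lt
  exact (isIntegral_div_iff_dvd hne).not.2
    (not_pow_sub_one_dvd_add_one_mul_pow_sub_one hd not_isUnit_natCast_of_prime hq heven hlt hz')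

lemma isIntegral_inv_sub_one_of_not_isPrimePow {n : ℕ} {η : K} (hη : IsPrimitiveRoot η n)
    (hn : 1 < n) (hnot : ¬ IsPrimePow n) : IsIntegral ℤ (η - 1)⁻¹ := by
  have : NeZero n := ⟨by omega⟩
  have hη' := hη.toInteger_isPrimitiveRoot
  have hdvd := (isUnit_sub_one_of_not_isPrimePow hη' hn hnot).dvd (a := 1)
  rw [← one_div]
  exact (isIntegral_div_iff_dvd (hη'.sub_one_ne_zero hn)).2 hdvd

lemma isIntegral_aeval_sub_aeval_div {x y : K} (hxy : x ≠ y) (hx : IsIntegral ℤ x)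
    (hy : IsIntegral ℤ y) (p : ℤ[X]) :
    IsIntegral ℤ ((aeval x p - aeval y p) / (x - y)) := by
  obtain ⟨x, rfl⟩ := IsIntegralClosure.isIntegral_iff (A := 𝓞 K).1 hx
  obtain ⟨y, rfl⟩ := IsIntegralClosure.isIntegral_iff (A := 𝓞 K).1 hy
  have hne : x - y ≠ 0 := sub_ne_zero.2 fun h ↦ hxy (h ▸ rfl)
  have hdvd : x - y ∣ aeval x p - aeval y p := by
    simpa only [aeval_def, eval₂_eq_eval_map] using sub_dvd_eval_sub x y _
  simpa [aeval_algebraMap_apply] using (isIntegral_div_iff_dvd hne).2 hdvd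

lemma mem_adjoin_of_isIntegral [Algebra ℚ K] {e : ℕ} [NeZero e] {ζ : K}
    (hζ : IsPrimitiveRoot ζ e) (hgen : Algebra.adjoin ℚ {ζ} = ⊤) {b : K} (hb : IsIntegral ℤ b) :
    b ∈ Algebra.adjoin ℤ {ζ} := by
  have : CharZero K := algebraRat.charZero K
  obtain rfl : ‹Algebra ℚ K› = DivisionRing.toRatAlgebra := Subsingleton.elim _ _
  have : IsCyclotomicExtension {e} ℚ K := by
    refine (IsCyclotomicExtension.iff_singleton e ℚ K).2 ⟨⟨ζ, hζ⟩, fun x ↦ ?_⟩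
    have hx : x ∈ Algebra.adjoin ℚ {ζ} := hgen ▸ Algebra.mem_top
    exact Algebra.adjoin_mono (by simpa using hζ.pow_eq_one) hx
  obtain ⟨y, rfl⟩ :=
    (IsCyclotomicExtension.Rat.isIntegralClosure_adjoin_singleton hζ).isIntegral_iff.1 hb
  exact y.2

end Integrality

section Cyclotomic

open Subgroup

lemma eq_zpowers_pow_of_forall_prime {G : Type*} [Group G] {g : G} {H : Subgroup G} {m : ℕ}
    (hle : H ≤ zpowers g) (hm : g ^ m ∈ H)
    (hprime : ∀ n q : ℕ, q.Prime → m = n * q → g ^ n ∉ H) : H = zpowers (g ^ m) := by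
  refine le_antisymm (fun h hh ↦ ?_) (zpowers_le.2 hm)
  obtain ⟨i, rfl⟩ := mem_zpowers_iff.1 (hle hh)
  set k := Int.gcd i m with hk
  have hgk : g ^ k ∈ H := by
    rw [← zpow_natCast, hk, Int.gcd_eq_gcd_ab, zpow_add, zpow_mul, zpow_mul, zpow_natCast]
    exact mul_mem (zpow_mem hh _) (zpow_mem hm _)
  obtain ⟨r, hr⟩ : k ∣ m := Int.natCast_dvd_natCast.1 (Int.gcd_dvd_right i m)
  obtain rfl : r = 1 := by
    by_contra hr1
    obtain ⟨q, hq, s, rfl⟩ := Nat.exists_prime_and_dvd hr1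
    refine hprime (k * s) q hq (by rw [hr, mul_assoc, mul_comm q]) ?_
    rw [pow_mul]
    exact pow_mem hgk s
  obtain ⟨j, hj⟩ : (m : ℤ) ∣ i := by
    rw [hr, mul_one]
    exact Int.gcd_dvd_left i m
  exact mem_zpowers_iff.2 ⟨j, by rw [hj, zpow_mul, zpow_natCast]⟩

lemma eq_one_of_mem_zpowers_pow {G : Type*} [CommGroup G] {g : G} {d m : ℕ} (hpos : 0 < d * m)
    (hg : IsPrimitiveRoot g (d * m)) (hmem : g ∈ zpowers (g ^ m)) : m = 1 := by
  have hdvd := orderOf_dvd_of_mem_zpowers hmem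
  rw [← hg.eq_orderOf, ← (hg.pow hpos (mul_comm d m)).eq_orderOf] at hdvd
  exact Nat.dvd_one.1 (Nat.dvd_of_mul_dvd_mul_left (Nat.pos_of_mul_pos_right hpos) (by simpa))

variable {K} {conj : K →+* K} {z t : Kˣ}

lemma zpowers_le_unitaryUnits {e : ℕ} (he : 0 < e) (hz : z ^ e = 1) (hconj : conj z = ↑z⁻¹) :
    zpowers z ≤ unitaryUnits conj := by
  refine zpowers_le.2 ⟨IsIntegral.of_pow he ?_, hconj⟩
  rw [← Units.val_pow_eq_pow_val, hz]
  exact isIntegral_one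

lemma unitaryUnits_le_latticeStabilizer {v : K} (hv : IsIntegral ℤ v) :
    unitaryUnits conj ≤ latticeStabilizer conj v :=
  fun _ hu ↦ ⟨hu, (hu.1.sub isIntegral_one).mul hv⟩

lemma isIntegral_of_mem_latticeStabilizer {n : ℕ} {η : Kˣ} (hη : IsPrimitiveRoot η n)
    (hn : 1 < n) (hnot : ¬ IsPrimePow n) {v : K} (hmem : η ∈ latticeStabilizer conj v) :
    IsIntegral ℤ v := by
  have hη' : IsPrimitiveRoot (η : K) n := IsPrimitiveRoot.coe_units_iff.2 hη
  have hinv := isIntegral_inv_sub_one_of_not_isPrimePow hη' hn hnot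
  simpa [inv_mul_cancel_left₀ (hη'.sub_one_ne_zero hn)] using hinv.mul hmem.2

lemma eq_one_of_latticeStabilizer_inf_eq {d m : ℕ} (hpos : 0 < d * m)
    (hz : IsPrimitiveRoot z (d * m)) (hconj : conj z = ↑z⁻¹) (hd : d ≠ 1)
    (hnot : ¬ IsPrimePow d) {v : K}
    (hstab : latticeStabilizer conj v ⊓ zpowers z = zpowers (z ^ m)) : m = 1 := by
  have hmem : z ^ m ∈ latticeStabilizer conj v ⊓ zpowers z := hstab ▸ mem_zpowers _
  have hd1 : 1 < d := by
    have := Nat.pos_of_mul_pos_right hpos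
    omega
  have hv := isIntegral_of_mem_latticeStabilizer (hz.pow hpos (mul_comm d m)) hd1 hnot hmem.1
  refine eq_one_of_mem_zpowers_pow hpos hz ?_
  rw [← hstab]
  exact ⟨unitaryUnits_le_latticeStabilizer hv
    (zpowers_le_unitaryUnits hpos hz.pow_eq_one hconj (mem_zpowers z)), mem_zpowers z⟩

lemma isIntegral_map_sub_self_div [Algebra ℚ K] {e : ℕ} (he : 2 < e) (hz : IsPrimitiveRoot z e)
    (hconj : conj z = ↑z⁻¹) (hgen : Algebra.adjoin ℚ {(z : K)} = ⊤) {b : K}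
    (hb : IsIntegral ℤ b) : IsIntegral ℤ ((conj b - b) / (↑z⁻¹ - z)) := by
  have : NeZero e := ⟨by omega⟩
  have hunitary := zpowers_le_unitaryUnits (by omega) hz.pow_eq_one hconj (mem_zpowers z)
  have hne : ((z⁻¹ : Kˣ) : K) ≠ z := fun h ↦ hz.pow_ne_one_of_pos_of_lt two_ne_zero he <| by
    rw [pow_two, mul_eq_one_iff_inv_eq, Units.ext h]
  have hmem := mem_adjoin_of_isIntegral (IsPrimitiveRoot.coe_units_iff.2 hz) hgen hb
  rw [Algebra.adjoin_singleton_eq_range_aeval] at hmem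
  obtain ⟨p, rfl⟩ := (AlgHom.mem_range _).1 hmem
  have hmap : conj (Polynomial.aeval (z : K) p) = Polynomial.aeval (↑z⁻¹ : K) p := by
    rw [← hconj]
    exact (Polynomial.aeval_algHom_apply conj.toIntAlgHom (z : K) p).symm
  exact hmap ▸ isIntegral_aeval_sub_aeval_div hne (inv_mem hunitary).1 hunitary.1 p

-- Applied to `b = (z ^ 2 - 1) * v`, the congruence `conj b ≡ b` modulo `z⁻¹ - z` makes
-- `v + conj v` integral.
lemma mem_latticeStabilizer_of_sq_mem [Algebra ℚ K] {e : ℕ} (he : 2 < e)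
    (hz : IsPrimitiveRoot z e) (hconj : conj z = ↑z⁻¹) (hinv : Function.Involutive conj)
    (hgen : Algebra.adjoin ℚ {(z : K)} = ⊤) {v : K} (hv : IsIntegral ℤ (v + z * conj v))
    (hsq : z ^ 2 ∈ latticeStabilizer conj v) : z ∈ latticeStabilizer conj v := by
  have hunitary := zpowers_le_unitaryUnits (by omega) hz.pow_eq_one hconj (mem_zpowers z)
  have hne : (z : K) ^ 2 - 1 ≠ 0 := sub_ne_zero.2
    ((IsPrimitiveRoot.coe_units_iff.2 hz).pow_ne_one_of_pos_of_lt two_ne_zero he)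
  have hquot := isIntegral_map_sub_self_div he hz hconj hgen hsq.2
  have htrace : v + conj v = z * ((conj ((↑(z ^ 2) - 1) * v) - (↑(z ^ 2) - 1) * v) / (↑z⁻¹ - z)) -
      (↑(z ^ 2) - 1) * v := by
    have hden : (↑z⁻¹ : K) - z = -(z ^ 2 - 1) / z := by
      push_cast
      field_simp
      ring
    rw [hden, map_mul, map_sub, Units.val_pow_eq_pow_val, map_pow, map_one, hconj]
    push_cast
    field_simp
    ring
  have hdiff : (z - 1) * conj v = v + z * conj v - (v + conj v) := by ring
  rw [← isIntegral_sub_one_mul_map_iff hinv hunitary, hdiff, htrace]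
  exact hv.sub ((hunitary.1.mul hquot).sub hsq.2)

lemma latticeStabilizer_inf_ne_zpowers_sq [Algebra ℚ K] {d : ℕ} (he : 2 < d * 2)
    (hz : IsPrimitiveRoot z (d * 2)) (hconj : conj z = ↑z⁻¹) (hinv : Function.Involutive conj)
    (hgen : Algebra.adjoin ℚ {(z : K)} = ⊤) {v : K} (hv : IsIntegral ℤ (v + z * conj v)) :
    latticeStabilizer conj v ⊓ zpowers z ≠ zpowers (z ^ 2) := by
  intro hstab
  have hsq : z ^ 2 ∈ latticeStabilizer conj v ⊓ zpowers z := hstab ▸ mem_zpowers _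
  have hmem : z ∈ zpowers (z ^ 2) := hstab ▸ mem_inf.2
    ⟨mem_latticeStabilizer_of_sq_mem he hz hconj hinv hgen hv hsq.1, mem_zpowers z⟩
  exact absurd (eq_one_of_mem_zpowers_pow (by omega) hz hmem) (by decide)

lemma div_sub_one_add_mul_map {η : Kˣ} (hη : η ≠ 1) (hconj : conj η = ↑η⁻¹) {a : K}
    (hta : t * conj a = a) : a / (η - 1) + t * conj (a / (η - 1)) = -a := by
  have hne : (η : K) - 1 ≠ 0 := sub_ne_zero.2 (Units.val_eq_one.not.2 hη)
  have hden : conj (η - 1) = -(η - 1) / η := by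
    rw [map_sub, map_one, hconj]
    push_cast
    field_simp
    ring
  rw [map_div₀, hden, mul_div_assoc', hta]
  field_simp
  ring

lemma exists_latticeStabilizer_eq_zpowers_pow (hz : zpowers z ≤ unitaryUnits conj) {m : ℕ}
    (hm : z ^ m ≠ 1) {a : K} (ha : IsIntegral ℤ a) (hta : t * conj a = a)
    (hnot : ∀ n q : ℕ, q.Prime → m = n * q → ¬ IsIntegral ℤ (a * (z ^ n - 1) / (z ^ m - 1))) :
    ∃ v : K, IsIntegral ℤ (v + t * conj v) ∧
      latticeStabilizer conj v ⊓ zpowers z = zpowers (z ^ m) := by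
  have hη := hz (npow_mem_zpowers z m)
  have hne : (↑(z ^ m) : K) - 1 ≠ 0 := sub_ne_zero.2 (Units.val_eq_one.not.2 hm)
  refine ⟨a / (↑(z ^ m) - 1), div_sub_one_add_mul_map hm hη.2 hta ▸ ha.neg,
    eq_zpowers_pow_of_forall_prime inf_le_right ⟨⟨hη, ?_⟩, npow_mem_zpowers z m⟩ ?_⟩
  · rwa [mul_div_cancel₀ _ hne]
  · rintro n q hq hmnq ⟨⟨-, hint⟩, -⟩
    refine hnot n q hq hmnq ?_
    rwa [mul_comm a, mul_div_assoc, ← Units.val_pow_eq_pow_val, ← Units.val_pow_eq_pow_val]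

lemma exists_latticeStabilizer_eq_bot [CharZero K] {e : ℕ} (he : e ≠ 0) (hz : z ^ e = 1) {a : K}
    (ha : a ≠ 0) (hae : IsIntegral ℤ (e / a)) (hta : t * conj a = -a) :
    ∃ v : K, IsIntegral ℤ (v + t * conj v) ∧ latticeStabilizer conj v ⊓ zpowers z = ⊥ := by
  have he' : (e : K) ≠ 0 := Nat.cast_ne_zero.2 he
  refine ⟨a / (2 * e ^ 2), ?_, (eq_bot_iff_forall _).2 ?_⟩
  · have hsum : a / (2 * e ^ 2) + t * conj (a / (2 * e ^ 2)) = 0 := by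
      rw [map_div₀, mul_div_assoc', hta, map_mul, map_pow, map_natCast, map_ofNat, neg_div,
        add_neg_cancel]
    exact hsum ▸ isIntegral_zero
  · rintro u ⟨⟨-, hint⟩, hu⟩
    by_contra hu1
    have hue : (u : K) ^ e = 1 := by
      obtain ⟨i, rfl⟩ := mem_zpowers_iff.1 hu
      rw [← Units.val_pow_eq_pow_val, ← zpow_natCast, zpow_comm, zpow_natCast, hz, one_zpow,
        Units.val_one]
    have hu1' : (u : K) ≠ 1 := Units.val_eq_one.not.2 hu1
    have hhalf : (u - 1) * (a / (2 * e ^ 2)) * (e / (u - 1)) * (e / a) = 1 / 2 := by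
      have := sub_ne_zero.2 hu1'
      field_simp
    exact not_isIntegral_one_half
      (hhalf ▸ (hint.mul (isIntegral_natCast_div_sub_one he hue hu1')).mul hae)

lemma exists_add_map_isIntegral_latticeStabilizer_eq_bot [CharZero K] {e : ℕ} (he : 2 < e)
    (hz : IsPrimitiveRoot z e) (hconj : conj z = ↑z⁻¹) :
    ∃ v : K, IsIntegral ℤ (v + (1 : Kˣ) * conj v) ∧
      latticeStabilizer conj v ⊓ zpowers z = ⊥ := by
  have hz' : IsPrimitiveRoot (z : K) e := IsPrimitiveRoot.coe_units_iff.2 hz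
  have hsq : (z : K) ^ 2 ≠ 1 := hz'.pow_ne_one_of_pos_of_lt two_ne_zero he
  have ha : (z : K) - ↑z⁻¹ = (z ^ 2 - 1) / z := by
    push_cast
    field_simp
  refine exists_latticeStabilizer_eq_bot (a := z - ↑z⁻¹) (by omega) hz.pow_eq_one ?_ ?_ ?_
  · rw [ha]
    exact div_ne_zero (sub_ne_zero.2 hsq) z.ne_zero
  · rw [ha, div_div_eq_mul_div, mul_div_right_comm]
    refine (isIntegral_natCast_div_sub_one (by omega) ?_ hsq).mul
      (hz'.isIntegral (by omega))
    rw [pow_right_comm, hz'.pow_eq_one, one_pow]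
  · rw [map_sub, hconj, Units.val_inv_eq_inv_val, map_inv₀, hconj]
    simp

lemma exists_latticeStabilizer_eq_zpowers_pow_iff [CharZero K] {d m : ℕ} (he : 2 < d * m)
    (hz : IsPrimitiveRoot z (d * m)) (hconj : conj z = ↑z⁻¹) :
    (∃ v : K, IsIntegral ℤ (v + (1 : Kˣ) * conj v) ∧
      latticeStabilizer conj v ⊓ zpowers z = zpowers (z ^ m)) ↔
    d = 1 ∨ m = 1 ∨ IsPrimePow d := by
  have hpos : 0 < d * m := by omega
  have hunitary := zpowers_le_unitaryUnits hpos hz.pow_eq_one hconj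
  have hz' : IsPrimitiveRoot (z : K) (d * m) := IsPrimitiveRoot.coe_units_iff.2 hz
  constructor
  · rintro ⟨v, -, hstab⟩
    by_contra! hne
    exact hne.2.1 (eq_one_of_latticeStabilizer_inf_eq hpos hz hconj hne.1 hne.2.2 hstab)
  · rintro (rfl | rfl | hd)
    · rw [one_mul] at hz he
      rw [hz.pow_eq_one, zpowers_one_eq_bot]
      exact exists_add_map_isIntegral_latticeStabilizer_eq_bot he hz hconj
    · refine ⟨0, by simpa using isIntegral_zero, ?_⟩
      rw [pow_one, inf_eq_right]
      exact hunitary.trans (unitaryUnits_le_latticeStabilizer isIntegral_zero)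
    · refine exists_latticeStabilizer_eq_zpowers_pow (a := 1) hunitary ?_ isIntegral_one
        (by simp) ?_
      · exact (hz.pow hpos (mul_comm d m)).ne_one hd.one_lt
      · rintro n q hq rfl
        rw [one_mul, pow_mul]
        exact not_isIntegral_sub_one_div_pow_sub_one hd hq.one_lt (hz'.pow hpos (by ring))

lemma exists_latticeStabilizer_eq_zpowers_pow_iff_of_even [Algebra ℚ K] {d m : ℕ} (he : 2 < d * m)
    (hz : IsPrimitiveRoot z (d * m)) (hconj : conj z = ↑z⁻¹) (hinv : Function.Involutive conj)
    (hgen : Algebra.adjoin ℚ {(z : K)} = ⊤) (hm : Even m) :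
    (∃ v : K, IsIntegral ℤ (v + z * conj v) ∧
      latticeStabilizer conj v ⊓ zpowers z = zpowers (z ^ m)) ↔
    d = 1 ∨ (2 < m ∧ IsPrimePow d) := by
  have : CharZero K := algebraRat.charZero K
  have hpos : 0 < d * m := by omega
  have hunitary := zpowers_le_unitaryUnits hpos hz.pow_eq_one hconj
  have hz' : IsPrimitiveRoot (z : K) (d * m) := IsPrimitiveRoot.coe_units_iff.2 hz
  constructor
  · rintro ⟨v, hv, hstab⟩
    refine or_iff_not_imp_left.2 fun hd1 ↦ ⟨?_, ?_⟩
    · have hm0 := Nat.pos_of_mul_pos_left hpos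
      refine lt_of_le_of_ne (Nat.le_of_dvd hm0 hm.two_dvd) ?_
      rintro rfl
      exact latticeStabilizer_inf_ne_zpowers_sq he hz hconj hinv hgen hv hstab
    · by_contra hnot
      obtain rfl := eq_one_of_latticeStabilizer_inf_eq hpos hz hconj hd1 hnot hstab
      simp at hm
  · rintro (rfl | ⟨hlt, hd⟩)
    · rw [one_mul] at hz he hz'
      rw [hz.pow_eq_one, zpowers_one_eq_bot]
      have hz1 : (z : K) ≠ 1 := hz'.ne_one (by omega)
      refine exists_latticeStabilizer_eq_bot (a := z - 1) (by omega) hz.pow_eq_one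
        (sub_ne_zero.2 hz1) (isIntegral_natCast_div_sub_one (by omega) hz'.pow_eq_one hz1) ?_
      rw [map_sub, hconj, map_one, mul_sub, Units.mul_inv, mul_one, neg_sub]
    · refine exists_latticeStabilizer_eq_zpowers_pow (a := z + 1) hunitary ?_ ?_ ?_ ?_
      · exact (hz.pow hpos (mul_comm d m)).ne_one hd.one_lt
      · exact (hunitary (mem_zpowers z)).1.add isIntegral_one
      · rw [map_add, hconj, map_one, mul_add, Units.mul_inv, mul_one, add_comm]
      · rintro n q hq rfl
        exact not_isIntegral_add_one_mul_pow_sub_one_div_pow_sub_one hd hq hm hlt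
          (mul_assoc d n q ▸ hz')

end Cyclotomic

section Reflections

variable {K} {ζ : K} (hz : ζ ≠ 0)

lemma sU_eq_refl (i : ℕ) : sU K ζ hz i = refl (Units.mk0 ζ hz ^ i) :=
  Units.ext (by simp [sU, sMat, coe_refl])

lemma closure_sU_pair (i m : ℕ) : Subgroup.closure {sU K ζ hz i, sU K ζ hz (m + i)} =
    dihedral (Units.mk0 ζ hz ^ i) (Subgroup.zpowers (Units.mk0 ζ hz ^ m)) := by
  rw [sU_eq_refl, sU_eq_refl, pow_add, closure_refl_pair]

end Reflections

/-- **Statement 19.**  Let `e > 2`, `ζ` a primitive `e`-th root of unity,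
`K = ℚ(ζ)`, and let complex conjugation on `K` send `ζ` to `ζ⁻¹`.  In `GL₂(K)` set
`s_i` = the matrix with rows `(0, ζ^i)` and `(ζ^{−i}, 0)`, let
`W = G(e,e,2) = ⟨s_0, s_1⟩`, and for each divisor `d` of `e` set
`G(d,d,2) = ⟨s_0, s_{e/d}⟩` and, when `e/d` is even, `G′(d,d,2) = ⟨s_1, s_{e/d+1}⟩`.
Let `V₀ = { v₁e₁ − v̄₁e₂ }` and `L₀ = { v₁e₁ − v̄₁e₂ : v₁ ∈ ℤ_K }`; for
`x ∈ V₀/L₀` let `W^x_refl` be the subgroup of `W` generated by the reflections of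
`W` fixing `x`.  Then: `G(d,d,2)` is conjugate in `W` to some `W^x_refl` if and only
if `d = 1`, `d = e`, or `d` is a prime power; and, for `e/d` even, `G′(d,d,2)` is
conjugate in `W` to some `W^x_refl` if and only if `d = 1`, or `d < e/2` and `d` is
a prime power. -/
theorem stmt_19 (e d : ℕ) (he : 2 < e) (hd : d ∣ e)
    [Algebra ℚ K] (ζ : K) (hz : ζ ≠ 0)
    (hζ : IsPrimitiveRoot ζ e) (hgen : Algebra.adjoin ℚ {ζ} = ⊤)
    (conj : K →+* K) (hconj : conj ζ = ζ⁻¹) (hconj2 : ∀ x, conj (conj x) = x) :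
    ((∃ (v₁ : K) (w : GL2K K),
        w ∈ Subgroup.closure {sU K ζ hz 0, sU K ζ hz 1} ∧
        Subgroup.map (MulAut.conj w).toMonoidHom
            (Subgroup.closure {sU K ζ hz 0, sU K ζ hz (e / d)})
          = Subgroup.closure
              {g : GL2K K | g ∈ Subgroup.closure {sU K ζ hz 0, sU K ζ hz 1} ∧
                IsRefl2 K g ∧
                memL0 K conj (g.val.mulVec ![v₁, -conj v₁] - ![v₁, -conj v₁])}) ↔
      (d = 1 ∨ d = e ∨ IsPrimePow d)) ∧
    (Even (e / d) →
      ((∃ (v₁ : K) (w : GL2K K),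
          w ∈ Subgroup.closure {sU K ζ hz 0, sU K ζ hz 1} ∧
          Subgroup.map (MulAut.conj w).toMonoidHom
              (Subgroup.closure {sU K ζ hz 1, sU K ζ hz (e / d + 1)})
            = Subgroup.closure
                {g : GL2K K | g ∈ Subgroup.closure {sU K ζ hz 0, sU K ζ hz 1} ∧
                  IsRefl2 K g ∧
                  memL0 K conj (g.val.mulVec ![v₁, -conj v₁] - ![v₁, -conj v₁])}) ↔
        (d = 1 ∨ (2 * d < e ∧ IsPrimePow d)))) := by
  have : CharZero K := algebraRat.charZero K
  obtain ⟨m, rfl⟩ := hd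
  have hd0 : 0 < d := Nat.pos_of_mul_pos_right (by omega : 0 < d * m)
  set z := Units.mk0 ζ hz
  have hzroot : IsPrimitiveRoot z (d * m) := IsPrimitiveRoot.coe_units_iff.1 hζ
  have hzconj : conj z = ↑z⁻¹ := by simpa [z] using hconj
  have hunitary := zpowers_le_unitaryUnits (by omega) hzroot.pow_eq_one hzconj
  have hW : Subgroup.closure {sU K ζ hz 0, sU K ζ hz 1} = dihedral 1 (Subgroup.zpowers z) := by
    simpa using closure_sU_pair hz 0 1
  have hG : Subgroup.closure {sU K ζ hz 0, sU K ζ hz m} =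
      dihedral 1 (Subgroup.zpowers (z ^ m)) := by
    simpa using closure_sU_pair hz 0 m
  have hG' : Subgroup.closure {sU K ζ hz 1, sU K ζ hz (m + 1)} =
      dihedral z (Subgroup.zpowers (z ^ m)) := by
    simpa using closure_sU_pair hz 1 m
  rw [Nat.mul_div_cancel_left m hd0, hW, hG, hG']
  constructor
  · refine (isConj_reflectionStabilizer_iff hconj2 hunitary (one_mem _) _).trans ?_
    rw [exists_latticeStabilizer_eq_zpowers_pow_iff he hzroot hzconj, eq_comm (a := d) (b := d * m),
      Nat.mul_eq_left hd0.ne']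
  · intro hm
    refine (isConj_reflectionStabilizer_iff hconj2 hunitary (Subgroup.mem_zpowers z) _).trans ?_
    rw [exists_latticeStabilizer_eq_zpowers_pow_iff_of_even he hzroot hzconj hconj2 hgen hm,
      mul_comm 2 d, Nat.mul_lt_mul_left hd0]

end Spets
end
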